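/- arXiv:2201.10501 — 4 statements merged into one kernel-verified Lean document; each statement's English description precedes it below -/
import Mathlib

section
/- Let 𝒢 be a finite connected simple graph with one fixed ribbon structure and basis (b_0, b_0b_1) used for all facet graphs, and let J(𝒢) be the set of Jaeger trees of all facet graphs of 𝒢. Let {e_1, …, e_r} be a set of directed edges (orientations of edges of 𝒢). Suppose T ∈ J(𝒢) contains e_1, …, e_r and every tail-edge of T belongs to {e_1, …, e_r} (the remaining e_i being head-edges of T). Then no Jaeger tree T′ ∈ J(𝒢) other than possibly T has its set of tail-edges equal to {e_1, …, e_r}. -/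
open scoped Classical Pointwise

namespace SEP

variable {V : Type*} [Fintype V] [DecidableEq V]

/-- The undirected simple graph underlying a set of directed edges. -/
def fromDir (D : Set (V × V)) : SimpleGraph V :=
  SimpleGraph.fromRel (fun u v => (u, v) ∈ D)

/-- A layering of a simple graph `G`: the layer difference along each edge is at most one,
and the edges with layer difference exactly one form a connected spanning subgraph. -/
structure IsLayering (G : SimpleGraph V) (l : V → ℤ) : Prop where
  step : ∀ ⦃u v⦄, G.Adj u v → |l u - l v| ≤ 1
  conn : (SimpleGraph.fromRel fun u v => G.Adj u v ∧ |l u - l v| = 1).Connected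

/-- The facet graph (as a set of directed edges) associated to a layering. -/
def facetDigraph (G : SimpleGraph V) (l : V → ℤ) : Set (V × V) :=
  {p | G.Adj p.1 p.2 ∧ l p.2 - l p.1 = 1}

/-- `D` is a facet graph of `G`. -/
def IsFacetGraph (G : SimpleGraph V) (D : Set (V × V)) : Prop :=
  ∃ l : V → ℤ, IsLayering G l ∧ D = facetDigraph G l

/-- A ribbon structure on `G`: at each vertex a cyclic permutation of the incident edges,
encoded by the "next neighbour" function `ρ`. -/
structure IsRibbon (G : SimpleGraph V) (ρ : V → V → V) : Prop where
  adj : ∀ ⦃x y⦄, G.Adj x y → G.Adj x (ρ x y)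
  cyc : ∀ ⦃x y z⦄, G.Adj x y → G.Adj x z → ∃ k : ℕ, (ρ x)^[k] y = z

/-- One step of the Bernardi tour of the tree with (undirected) edge set `T`:
from the node–edge pair (x, xy) move to (y, yx⁺) if xy is a tree edge
and to (x, xy⁺) otherwise. -/
noncomputable def tourStep (ρ : V → V → V) (T : Set (Sym2 V)) (p : V × V) : V × V :=
  if s(p.1, p.2) ∈ T then (p.2, ρ p.2 p.1) else (p.1, ρ p.1 p.2)

/-- The tour of the tree `T`, starting at the basis `(b0, b0b1)`. -/
noncomputable def tourSeq (ρ : V → V → V) (T : Set (Sym2 V)) (b0 b1 : V) (n : ℕ) : V × V :=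
  (tourStep ρ T)^[n] (b0, b1)

/-- The first time the node–edge pair (x, edge xy) becomes current in the tour of `T`. -/
noncomputable def firstVisit (ρ : V → V → V) (T : Set (Sym2 V)) (b0 b1 x y : V) : ℕ :=
  sInf {n | tourSeq ρ T b0 b1 n = (x, y)}

/-- The undirected edge set of a set of directed edges. -/
def und (T : Set (V × V)) : Set (Sym2 V) := {e | ∃ p ∈ T, e = s(p.1, p.2)}

/-- `T` is a spanning tree of the digraph `D`, recorded with its orientation. -/
def IsSpanningTreeOf (T D : Set (V × V)) : Prop :=
  T ⊆ D ∧ (fromDir T).IsTree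

/-- `T` is a Jaeger tree of the digraph `D` with respect to the ribbon structure `ρ` and the
basis `(b0, b1)`: it is a spanning tree of `D` and every directed edge t→h of `D` not in `T`
is first reached at its tail `t` in the tour of `T`. -/
def IsJaegerTree (ρ : V → V → V) (b0 b1 : V) (D T : Set (V × V)) : Prop :=
  IsSpanningTreeOf T D ∧
    ∀ p ∈ D, s(p.1, p.2) ∉ und T →
      firstVisit ρ (und T) b0 b1 p.1 p.2 < firstVisit ρ (und T) b0 b1 p.2 p.1

/-- The directed edge `p = (t, h)` of `T` is a tail-edge of `T` w.r.t. the base vertex `b0`: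
`b0` and `t` lie in the same component of `T - th`. -/
def IsTailEdge (b0 : V) (T : Set (V × V)) (p : V × V) : Prop :=
  p ∈ T ∧ (fromDir (T \ {p})).Reachable b0 p.1

/-- The set of tail-edges of `T`. -/
def tailEdges (b0 : V) (T : Set (V × V)) : Set (V × V) :=
  {p | IsTailEdge b0 T p}

/-- The number of tail-edges of `T`. -/
noncomputable def numTailEdges (b0 : V) (T : Set (V × V)) : ℕ :=
  Nat.card (tailEdges b0 T)

/-- The ordering `≺` of Jaeger trees of one facet graph: `T' ≺ T` iff their tours first
differ at a current node–edge pair `(t, th)` with the directed edge `th ∉ T'` and `th ∈ T`. -/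
def treePrec (ρ : V → V → V) (b0 b1 : V) (T' T : Set (V × V)) : Prop :=
  ∃ n : ℕ, (∀ m ≤ n, tourSeq ρ (und T') b0 b1 m = tourSeq ρ (und T) b0 b1 m) ∧
    tourSeq ρ (und T) b0 b1 n ∈ T ∧ tourSeq ρ (und T) b0 b1 n ∉ T'

/-- The standard basis vector of `ℝ^V` corresponding to a vertex. -/
noncomputable def stdVec (v : V) : V → ℝ := fun w => if w = v then 1 else 0

/-- The symmetric edge polytope of `G`. -/
noncomputable def symEdgePolytope (G : SimpleGraph V) : Set (V → ℝ) :=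
  convexHull ℝ {x | ∃ u v, G.Adj u v ∧ x = stdVec u - stdVec v}

/-- The (root polytope) simplex spanned by a set of directed edges. -/
noncomputable def simplexOf (T : Set (V × V)) : Set (V → ℝ) :=
  convexHull ℝ {x | ∃ p ∈ T, x = stdVec p.2 - stdVec p.1}

/-- A weight function with base vertex `b0`. -/
structure IsWeight (b0 : V) (f : V → ℝ) : Prop where
  base : f b0 = 1
  lb : ∀ v, v ≠ b0 → -1 ≤ f v
  ub : ∀ v, v ≠ b0 → f v ≤ 0
  total : ∑ v ∈ Finset.univ.erase b0, f v = -1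
  indep : LinearIndependent ℚ (fun v : {w : V // w ≠ b0} => f v.1)

/-- The number of lattice points of the `k`-th dilate of the symmetric edge polytope. -/
noncomputable def latticeCount (G : SimpleGraph V) (k : ℕ) : ℕ :=
  Nat.card {x : V → ℤ // (fun v => (x v : ℝ)) ∈ (k : ℝ) • symEdgePolytope G}

/-- `s` is a side of a bipartition of `G`. -/
def IsBipartition (G : SimpleGraph V) (s : Set V) : Prop :=
  ∀ ⦃u v⦄, G.Adj u v → (u ∈ s ↔ v ∉ s)

/-- A digraph (set of directed edges) is semi-balanced if every cycle of the underlying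
undirected graph has the same number of edges oriented in the two cyclic directions. -/
def IsSemiBalanced (D : Set (V × V)) : Prop :=
  ∀ ⦃v : V⦄ (w : (fromDir D).Walk v v), w.IsCycle →
    (w.darts.countP fun d => decide ((d.toProd.1, d.toProd.2) ∈ D)) =
      (w.darts.countP fun d => decide ((d.toProd.2, d.toProd.1) ∈ D))

/-- `D` is an orientation of (all the edges of) `G`. -/
def IsOrientation (G : SimpleGraph V) (D : Set (V × V)) : Prop :=
  (∀ p ∈ D, G.Adj p.1 p.2) ∧ ∀ ⦃u v⦄, G.Adj u v → ((u, v) ∈ D ↔ (v, u) ∉ D)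

/-- The state of the greedy process: the set `H` of included directed edges, the set of
node–edge pairs that have already been current, and the current node–edge pair. -/
structure GreedyState (V : Type*) where
  H : Set (V × V)
  seen : Set (V × V)
  cur : V × V

/-- One step of the (almost-)greedy process in the digraph `D`; `special` is the set of
directed edges that are exceptionally included when first reached at their tail
(`special = ∅` gives the greedy process, `special = {(u,v)}` the u→v-almost greedy one).
Hidden edges (incident pairs whose edge is absent from `D`) are skipped. -/
noncomputable def greedyStep (D special : Set (V × V)) (ρ : V → V → V)
    (s : GreedyState V) : GreedyState V :=
  let x := s.cur.1
  let y := s.cur.2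
  let seen' := s.seen ∪ {s.cur}
  if (y, x) ∈ D then
    -- the current node `x` is the head of the directed edge (y, x)
    if (y, x) ∈ s.seen then ⟨s.H, seen', (x, ρ x y)⟩
    else ⟨s.H ∪ {(y, x)}, seen', (y, ρ y x)⟩
  else if (x, y) ∈ D then
    -- the current node `x` is the tail of the directed edge (x, y)
    if s.cur ∈ special ∧ (y, x) ∉ s.seen then ⟨s.H ∪ {(x, y)}, seen', (y, ρ y x)⟩
    else if (y, x) ∈ s.seen then ⟨s.H, seen', (y, ρ y x)⟩
    else ⟨s.H, seen', (x, ρ x y)⟩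
  else ⟨s.H, seen', (x, ρ x y)⟩

/-- The sequence of states of the (almost-)greedy process started at the basis `(b0, b1)`. -/
noncomputable def greedySeq (D special : Set (V × V)) (ρ : V → V → V) (b0 b1 : V)
    (n : ℕ) : GreedyState V :=
  (greedyStep D special ρ)^[n] ⟨∅, ∅, (b0, b1)⟩

/-- The stopping time of the (almost-)greedy process: the first moment at which a node–edge
pair becomes current for the second time. -/
noncomputable def greedyStopTime (D special : Set (V × V)) (ρ : V → V → V) (b0 b1 : V) : ℕ :=
  sInf {n | (greedySeq D special ρ b0 b1 n).cur ∈ (greedySeq D special ρ b0 b1 n).seen}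

/-- The edge set produced by the (almost-)greedy process. -/
noncomputable def greedyOutput (D special : Set (V × V)) (ρ : V → V → V) (b0 b1 : V) :
    Set (V × V) :=
  (greedySeq D special ρ b0 b1 (greedyStopTime D special ρ b0 b1)).H

/-- The status of the current node–edge pair `p = (x, y)` (node `x`, edge `xy`) with respect
to a facet graph `D` and a tree `T ⊆ D`: `0` if the edge is in the tree oriented y→x,
`1` if it is hidden, `2` if it is oriented x→y in `D` but not in the tree, `3` if it is in
the tree oriented x→y (and `4` in the remaining case: oriented y→x in `D` but not in `T`). -/
noncomputable def edgeStatus (D T : Set (V × V)) (p : V × V) : ℕ :=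
  if (p.2, p.1) ∈ T then 0
  else if (p.1, p.2) ∈ T then 3
  else if (p.1, p.2) ∈ D then 2
  else if (p.2, p.1) ∈ D then 4
  else 1

/-- The quadratic order `<₄` on Jaeger trees (with their facet graphs): the tours, together
with the statuses of the current edges, agree up to step `n`, and at step `n` the status of
the current edge for the first tree is smaller than for the second one. -/
def quadLT (ρ : V → V → V) (b0 b1 : V) (q q' : Set (V × V) × Set (V × V)) : Prop :=
  ∃ n : ℕ,
    (∀ m < n, tourSeq ρ (und q.2) b0 b1 m = tourSeq ρ (und q'.2) b0 b1 m ∧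
      edgeStatus q.1 q.2 (tourSeq ρ (und q.2) b0 b1 m) =
        edgeStatus q'.1 q'.2 (tourSeq ρ (und q'.2) b0 b1 m)) ∧
    tourSeq ρ (und q.2) b0 b1 n = tourSeq ρ (und q'.2) b0 b1 n ∧
    edgeStatus q.1 q.2 (tourSeq ρ (und q.2) b0 b1 n) <
      edgeStatus q'.1 q'.2 (tourSeq ρ (und q'.2) b0 b1 n)

end SEP

namespace SEP

/-!
Let `T` and `T'` be Jaeger trees, of the facet graphs of layerings `l` and `l'`, each containing
the tail-edges of the other.

Walk away from `b0` along `T`. A tail-edge of `T` also lies in the facet graph of `l'`, so `l` and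
`l'` both increase by one along it; a head-edge is traversed against its direction, so `l` decreases
by one and `l'` by at most one. Hence `l' - l` attains its minimum at `b0`. By symmetry it also
attains its maximum there, so it is constant and the two facet graphs coincide.

In a common facet graph, consider the first moment at which the tours of `T` and `T'` treat the
current edge `xy` differently, say `xy ∈ T` and `xy ∉ T'`. The edge has not been reached before, so
`b0` and `x` are connected in `T - xy`. If `xy` is directed from `x` to `y` it is a tail-edge of `T`
and must be in `T'`; otherwise the tour of `T'` reaches it first at its head, against the Jaeger
condition. So the tours agree forever, and they pass through every edge.
-/

section Tour

variable {V : Type*} {G H : SimpleGraph V} {ρ : V → V → V} {E E' : Set (Sym2 V)}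
  {b0 b1 x y z : V} {p : V × V}

/-- The edge of the node–edge pair that is current at time `n` of the tour of `E`. -/
noncomputable def tourEdge (ρ : V → V → V) (E : Set (Sym2 V)) (b0 b1 : V) (n : ℕ) : Sym2 V :=
  s((tourSeq ρ E b0 b1 n).1, (tourSeq ρ E b0 b1 n).2)

lemma tourEdge_of_tourSeq_eq {n : ℕ} (h : tourSeq ρ E b0 b1 n = (x, y)) :
    tourEdge ρ E b0 b1 n = s(x, y) := by
  rw [tourEdge, h]

lemma tourStep_of_mem (h : s(x, y) ∈ E) : tourStep ρ E (x, y) = (y, ρ y x) := if_pos h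

lemma tourStep_of_notMem (h : s(x, y) ∉ E) : tourStep ρ E (x, y) = (x, ρ x y) := if_neg h

lemma tourSeq_succ (n : ℕ) :
    tourSeq ρ E b0 b1 (n + 1) = tourStep ρ E (tourSeq ρ E b0 b1 n) :=
  Function.iterate_succ_apply' ..

lemma tourSeq_congr {n : ℕ}
    (h : ∀ m < n, tourEdge ρ E b0 b1 m ∈ E ↔ tourEdge ρ E b0 b1 m ∈ E') :
    tourSeq ρ E b0 b1 n = tourSeq ρ E' b0 b1 n := by
  induction n with
  | zero => rfl
  | succ n ih =>
    have hn := h n n.lt_succ_self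
    rw [tourEdge] at hn
    rw [tourSeq_succ, tourSeq_succ, ← ih fun m hm => h m (hm.trans n.lt_succ_self)]
    simp only [tourStep, hn]

lemma reachable_deleteEdges_tourSeq {e : Sym2 V} {n : ℕ}
    (h : ∀ m < n, tourEdge ρ H.edgeSet b0 b1 m ≠ e) :
    (H.deleteEdges {e}).Reachable b0 (tourSeq ρ H.edgeSet b0 b1 n).1 := by
  induction n with
  | zero => exact .refl _
  | succ n ih =>
    have reach_n := ih fun m hm => h m (hm.trans n.lt_succ_self)
    rw [tourSeq_succ, tourStep]
    split_ifs with hcross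
    · exact reach_n.trans
        (SimpleGraph.deleteEdges_adj.2 ⟨hcross, h n n.lt_succ_self⟩).reachable
    · exact reach_n

lemma IsRibbon.exists_adj_apply_eq (hρ : IsRibbon G ρ) (hxy : G.Adj x y) :
    ∃ z, G.Adj x z ∧ ρ x z = y := by
  obtain ⟨k, hk⟩ := hρ.cyc (hρ.adj hxy) hxy
  have hmaps : Set.MapsTo (ρ x) (G.neighborSet x) (G.neighborSet x) := fun _ hz => hρ.adj hz
  refine ⟨(ρ x)^[k] y, hmaps.iterate k hxy, ?_⟩
  rwa [← Function.iterate_succ_apply' (ρ x), Function.iterate_succ_apply]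

lemma IsRibbon.mapsTo_tourStep (hρ : IsRibbon G ρ) (E : Set (Sym2 V)) :
    Set.MapsTo (tourStep ρ E) {p | G.Adj p.1 p.2} {p | G.Adj p.1 p.2} := by
  rintro ⟨x, y⟩ hxy
  by_cases hE : s(x, y) ∈ E
  · rw [tourStep_of_mem hE]
    exact hρ.adj hxy.symm
  · rw [tourStep_of_notMem hE]
    exact hρ.adj hxy

lemma IsRibbon.surjOn_tourStep (hρ : IsRibbon G ρ) (E : Set (Sym2 V)) :
    Set.SurjOn (tourStep ρ E) {p | G.Adj p.1 p.2} {p | G.Adj p.1 p.2} := by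
  rintro ⟨x, y⟩ hxy
  obtain ⟨z, hxz : G.Adj x z, rfl : ρ x z = y⟩ := hρ.exists_adj_apply_eq hxy
  by_cases hE : s(z, x) ∈ E
  · exact ⟨(z, x), hxz.symm, tourStep_of_mem hE⟩
  · exact ⟨(x, z), hxz, tourStep_of_notMem (Sym2.eq_swap ▸ hE)⟩

lemma IsRibbon.mem_periodicPts_tourStep [Finite V] (hρ : IsRibbon G ρ) (E : Set (Sym2 V))
    (hp : G.Adj p.1 p.2) : p ∈ Function.periodicPts (tourStep ρ E) := by
  have hmaps := hρ.mapsTo_tourStep E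
  have hinj : Function.Injective hmaps.restrict :=
    Finite.injective_iff_surjective.2 (hmaps.restrict_surjective_iff.2 (hρ.surjOn_tourStep E))
  obtain ⟨k, hk, hper⟩ := hinj.mem_periodicPts ⟨p, hp⟩
  rw [Function.IsPeriodicPt, hmaps.iterate_restrict] at hper
  exact ⟨k, hk, congrArg Subtype.val hper⟩

/- By periodicity the tour reaches the bridge `xy` again; it has then stayed on the side of `y`. -/
lemma IsRibbon.exists_iterate_tourStep_eq_swap [Finite V] (hρ : IsRibbon G ρ) (hHG : H ≤ G)
    (hxy : H.Adj x y) (hbridge : H.IsBridge s(x, y)) :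
    ∃ k, (tourStep ρ H.edgeSet)^[k] (x, y) = (y, x) := by
  have step_xy : tourStep ρ H.edgeSet (x, y) = (y, ρ y x) := tourStep_of_mem hxy
  have hreturn : ∃ n, tourEdge ρ H.edgeSet y (ρ y x) n = s(x, y) := by
    obtain ⟨_ | n, hpos, hper⟩ := hρ.mem_periodicPts_tourStep H.edgeSet (p := (x, y)) (hHG hxy)
    · exact absurd hpos (lt_irrefl 0)
    · rw [Function.IsPeriodicPt, Function.IsFixedPt, Function.iterate_succ_apply, step_xy] at hper
      exact ⟨n, tourEdge_of_tourSeq_eq hper⟩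
  have hreach := reachable_deleteEdges_tourSeq fun _ hm => Nat.find_min hreturn hm
  rcases Sym2.eq_iff.1 (Nat.find_spec hreturn) with ⟨hx, -⟩ | ⟨hy, hx⟩
  · exact absurd (hx ▸ hreach).symm (SimpleGraph.isBridge_iff.1 hbridge)
  · refine ⟨Nat.find hreturn + 1, ?_⟩
    rw [Function.iterate_succ_apply, step_xy]
    exact Prod.ext hy hx

lemma iterate_tourStep_mem_range_tourSeq (k : ℕ) (h : p ∈ Set.range (tourSeq ρ E b0 b1)) :
    (tourStep ρ E)^[k] p ∈ Set.range (tourSeq ρ E b0 b1) := by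
  obtain ⟨n, rfl⟩ := h
  exact ⟨k + n, Function.iterate_add_apply ..⟩

lemma IsRibbon.swap_mem_range_tourSeq [Finite V] (hρ : IsRibbon G ρ) (hHG : H ≤ G)
    (hH : H.IsAcyclic) (hxy : H.Adj x y) (h : (x, y) ∈ Set.range (tourSeq ρ H.edgeSet b0 b1)) :
    (y, x) ∈ Set.range (tourSeq ρ H.edgeSet b0 b1) := by
  obtain ⟨k, hk⟩ := hρ.exists_iterate_tourStep_eq_swap hHG hxy
    (SimpleGraph.isAcyclic_iff_forall_isBridge.1 hH hxy)
  exact hk ▸ iterate_tourStep_mem_range_tourSeq k h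

lemma IsRibbon.rotate_mem_range_tourSeq [Finite V] (hρ : IsRibbon G ρ) (hHG : H ≤ G)
    (hH : H.IsAcyclic) (h : (x, y) ∈ Set.range (tourSeq ρ H.edgeSet b0 b1)) :
    (x, ρ x y) ∈ Set.range (tourSeq ρ H.edgeSet b0 b1) := by
  by_cases hxy : H.Adj x y
  · have step_yx : tourStep ρ H.edgeSet (y, x) = (x, ρ x y) := tourStep_of_mem hxy.symm
    exact step_yx ▸ iterate_tourStep_mem_range_tourSeq 1
      (hρ.swap_mem_range_tourSeq hHG hH hxy h)
  · have step_xy : tourStep ρ H.edgeSet (x, y) = (x, ρ x y) := tourStep_of_notMem hxy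
    exact step_xy ▸ iterate_tourStep_mem_range_tourSeq 1 h

lemma IsRibbon.mem_range_tourSeq_of_adj [Finite V] (hρ : IsRibbon G ρ) (hHG : H ≤ G)
    (hH : H.IsAcyclic) (h : (x, y) ∈ Set.range (tourSeq ρ H.edgeSet b0 b1))
    (hxy : G.Adj x y) (hxz : G.Adj x z) :
    (x, z) ∈ Set.range (tourSeq ρ H.edgeSet b0 b1) := by
  obtain ⟨k, rfl⟩ := hρ.cyc hxy hxz
  have hmaps : Set.MapsTo (ρ x) {w | (x, w) ∈ Set.range (tourSeq ρ H.edgeSet b0 b1)}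
      {w | (x, w) ∈ Set.range (tourSeq ρ H.edgeSet b0 b1)} :=
    fun _ hw => hρ.rotate_mem_range_tourSeq hHG hH hw
  exact hmaps.iterate k h

lemma IsRibbon.mem_range_tourSeq [Finite V] (hρ : IsRibbon G ρ) (hHG : H ≤ G)
    (hH : H.IsAcyclic) (hb : G.Adj b0 b1) (hx : H.Reachable b0 x) (hxy : G.Adj x y) :
    (x, y) ∈ Set.range (tourSeq ρ H.edgeSet b0 b1) := by
  rw [SimpleGraph.reachable_iff_reflTransGen] at hx
  induction hx generalizing y with
  | refl => exact hρ.mem_range_tourSeq_of_adj hHG hH ⟨0, rfl⟩ hb hxy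
  | tail _ huv ih =>
    exact hρ.mem_range_tourSeq_of_adj hHG hH
      (hρ.swap_mem_range_tourSeq hHG hH huv (ih (hHG huv))) (hHG huv.symm) hxy

end Tour

section PartialOrientation

variable {V : Type*} {G : SimpleGraph V} {ρ : V → V → V} {D T T' : Set (V × V)} {b0 b1 x y : V}

/-- An orientation of some of the edges of `G`, the remaining ones being hidden. Facet graphs are
the example of interest; their subsets, in particular oriented spanning trees, are covered too. -/
structure IsPartialOrientation (G : SimpleGraph V) (D : Set (V × V)) : Prop where
  adj : ∀ ⦃x y⦄, (x, y) ∈ D → G.Adj x y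
  asymm : ∀ ⦃x y⦄, (x, y) ∈ D → (y, x) ∉ D

lemma isPartialOrientation_facetDigraph (G : SimpleGraph V) (l : V → ℤ) :
    IsPartialOrientation G (facetDigraph G l) where
  adj _ _ h := h.1
  asymm x y hxy hyx := by
    have hup : l y - l x = 1 := hxy.2
    have hdown : l x - l y = 1 := hyx.2
    lia

lemma IsPartialOrientation.mono (hD : IsPartialOrientation G D) (hTD : T ⊆ D) :
    IsPartialOrientation G T where
  adj _ _ h := hD.adj (hTD h)
  asymm _ _ h h' := hD.asymm (hTD h) (hTD h')

lemma fromDir_adj : (fromDir T).Adj x y ↔ x ≠ y ∧ ((x, y) ∈ T ∨ (y, x) ∈ T) :=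
  SimpleGraph.fromRel_adj ..

lemma mk_mem_und : s(x, y) ∈ und T ↔ (x, y) ∈ T ∨ (y, x) ∈ T := by
  constructor
  · rintro ⟨⟨a, b⟩, hab, h⟩
    rcases Sym2.eq_iff.1 h with ⟨rfl, rfl⟩ | ⟨rfl, rfl⟩
    exacts [.inl hab, .inr hab]
  · rintro (h | h)
    exacts [⟨_, h, rfl⟩, ⟨_, h, Sym2.eq_swap⟩]

lemma fromDir_diff_singleton (hyx : (y, x) ∉ T) :
    fromDir (T \ {(x, y)}) = (fromDir T).deleteEdges {s(x, y)} := by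
  ext u v
  simp only [fromDir_adj, SimpleGraph.deleteEdges_adj, Set.mem_sdiff, Set.mem_singleton_iff,
    Prod.mk.injEq, Sym2.eq_iff]
  grind

lemma IsPartialOrientation.fromDir_le (hT : IsPartialOrientation G T) : fromDir T ≤ G := by
  intro x y hxy
  rcases (fromDir_adj.1 hxy).2 with h | h
  exacts [hT.adj h, (hT.adj h).symm]

lemma IsPartialOrientation.und_eq_edgeSet (hT : IsPartialOrientation G T) :
    und T = (fromDir T).edgeSet := by
  ext e
  induction e with | _ x y
  rw [SimpleGraph.mem_edgeSet, fromDir_adj, mk_mem_und, iff_and_self]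
  rintro (h | h)
  exacts [(hT.adj h).ne, (hT.adj h).ne']

lemma IsPartialOrientation.subset_of_und_subset (hD : IsPartialOrientation G D)
    (hT : T ⊆ D) (hT' : T' ⊆ D) (h : und T ⊆ und T') : T ⊆ T' := by
  rintro ⟨x, y⟩ hxy
  rcases mk_mem_und.1 (h (mk_mem_und.2 (.inl hxy))) with hxy' | hyx'
  · exact hxy'
  · exact absurd (hT' hyx') (hD.asymm (hT hxy))

lemma IsPartialOrientation.isTailEdge_of_reachable (hT : IsPartialOrientation G T)
    (hxy : (x, y) ∈ T) (h : ((fromDir T).deleteEdges {s(x, y)}).Reachable b0 x) :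
    IsTailEdge b0 T (x, y) :=
  ⟨hxy, fromDir_diff_singleton (hT.asymm hxy) ▸ h⟩

lemma IsPartialOrientation.isTailEdge_of_isPath_cons (hT : IsPartialOrientation G T)
    {h : (fromDir T).Adj y x} {q : (fromDir T).Walk x b0} (hq : (q.cons h).IsPath)
    (hxy : (x, y) ∈ T) : IsTailEdge b0 T (x, y) := by
  have notMem_edges : s(x, y) ∉ q.edges := fun hmem =>
    ((SimpleGraph.Walk.cons_isPath_iff _ _).1 hq).2 (q.snd_mem_support_of_mem_edges hmem)
  exact hT.isTailEdge_of_reachable hxy (q.toDeleteEdge _ notMem_edges).reachable.symm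

lemma IsPartialOrientation.isTailEdge_of_first_reached_at_tail (hT : IsPartialOrientation G T)
    (hxy : (x, y) ∈ T) {n : ℕ} (hn : tourSeq ρ (und T) b0 b1 n = (x, y))
    (hfirst : ∀ m < n, tourEdge ρ (und T) b0 b1 m ≠ s(x, y)) : IsTailEdge b0 T (x, y) := by
  rw [hT.und_eq_edgeSet] at hn hfirst
  have hreach := reachable_deleteEdges_tourSeq hfirst
  rw [hn] at hreach
  exact hT.isTailEdge_of_reachable hxy hreach

end PartialOrientation

section Layering

variable {V : Type*} {G : SimpleGraph V} {l l' : V → ℤ} {T T' : Set (V × V)} {b0 : V}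

lemma IsLayering.sub_base_le_sub (hl' : IsLayering G l') (hT : T ⊆ facetDigraph G l)
    (hconn : (fromDir T).Connected) (htail : tailEdges b0 T ⊆ facetDigraph G l') (v : V) :
    l' b0 - l b0 ≤ l' v - l v := by
  obtain ⟨q, hq⟩ := (hconn v b0).exists_isPath
  induction q with
  | nil => rfl
  | @cons v w b0 h q ih =>
    refine (ih htail hq.of_cons).trans ?_
    rcases (fromDir_adj.1 h).2 with hvw | hwv
    · have hl_vw : l w - l v = 1 := (hT hvw).2
      have hl'_vw : |l' v - l' w| ≤ 1 := hl'.step (hT hvw).1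
      grind
    · have htail_wv : IsTailEdge b0 T (w, v) :=
        ((isPartialOrientation_facetDigraph G l).mono hT).isTailEdge_of_isPath_cons hq hwv
      have hl_wv : l v - l w = 1 := (hT hwv).2
      have hl'_wv : l' v - l' w = 1 := (htail htail_wv).2
      lia

lemma facetDigraph_eq_of_tailEdges_subset (hl : IsLayering G l) (hl' : IsLayering G l')
    (hT : T ⊆ facetDigraph G l) (hT' : T' ⊆ facetDigraph G l')
    (hconn : (fromDir T).Connected) (hconn' : (fromDir T').Connected)
    (htail : tailEdges b0 T ⊆ facetDigraph G l') (htail' : tailEdges b0 T' ⊆ facetDigraph G l) :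
    facetDigraph G l = facetDigraph G l' := by
  have hconst : ∀ v, l' v - l v = l' b0 - l b0 := fun v => by
    have hge := hl'.sub_base_le_sub hT hconn htail v
    have hle := hl.sub_base_le_sub hT' hconn' htail' v
    lia
  ext ⟨u, v⟩
  have hu := hconst u
  have hv := hconst v
  refine and_congr_right fun _ => ?_
  dsimp only
  lia

end Layering

section Jaeger

variable {V : Type*} [Finite V] {G : SimpleGraph V} {ρ : V → V → V} {D T T' : Set (V × V)}
  {b0 b1 : V}

lemma IsSpanningTreeOf.mem_range_tourSeq (hT : IsSpanningTreeOf T D)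
    (hD : IsPartialOrientation G D) (hρ : IsRibbon G ρ) (hb : G.Adj b0 b1) {x y : V}
    (hxy : G.Adj x y) : (x, y) ∈ Set.range (tourSeq ρ (und T) b0 b1) := by
  have hTor := hD.mono hT.1
  rw [hTor.und_eq_edgeSet]
  exact hρ.mem_range_tourSeq hTor.fromDir_le hT.2.isAcyclic hb (hT.2.connected b0 x) hxy

lemma IsJaegerTree.exists_lt_tourSeq_eq_tail (hT : IsJaegerTree ρ b0 b1 D T)
    (hD : IsPartialOrientation G D) (hρ : IsRibbon G ρ) (hb : G.Adj b0 b1) {t h : V}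
    (hth : (t, h) ∈ D) (hmem : s(t, h) ∉ und T) {n : ℕ}
    (hn : tourSeq ρ (und T) b0 b1 n = (h, t)) :
    ∃ m < n, tourSeq ρ (und T) b0 b1 m = (t, h) := by
  -- Without this the first visit would be the junk value `sInf ∅ = 0`.
  have tail_visited : {m | tourSeq ρ (und T) b0 b1 m = (t, h)}.Nonempty :=
    hT.1.mem_range_tourSeq hD hρ hb (hD.adj hth)
  have head_le : firstVisit ρ (und T) b0 b1 h t ≤ n := Nat.sInf_le hn
  exact ⟨firstVisit ρ (und T) b0 b1 t h, (hT.2 (t, h) hth hmem).trans_le head_le,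
    Nat.sInf_mem tail_visited⟩

lemma IsJaegerTree.tourEdge_mem_und_of_agree (hT' : IsJaegerTree ρ b0 b1 D T')
    (hD : IsPartialOrientation G D) (hρ : IsRibbon G ρ) (hb : G.Adj b0 b1) (hTD : T ⊆ D)
    (htail : tailEdges b0 T ⊆ T') {n : ℕ}
    (hagree : ∀ m < n, tourEdge ρ (und T) b0 b1 m ∈ und T ↔ tourEdge ρ (und T) b0 b1 m ∈ und T')
    (hn : tourEdge ρ (und T) b0 b1 n ∈ und T) : tourEdge ρ (und T) b0 b1 n ∈ und T' := by
  have tours_eq : ∀ m ≤ n, tourSeq ρ (und T) b0 b1 m = tourSeq ρ (und T') b0 b1 m :=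
    fun m hm => tourSeq_congr fun k hk => hagree k (hk.trans_le hm)
  by_contra hn'
  have hfirst : ∀ m < n, tourEdge ρ (und T) b0 b1 m ≠ tourEdge ρ (und T) b0 b1 n :=
    fun m hm heq => hn' (heq ▸ (hagree m hm).1 (heq ▸ hn))
  obtain ⟨⟨x, y⟩, hxy⟩ : ∃ p, tourSeq ρ (und T) b0 b1 n = p := ⟨_, rfl⟩
  rw [tourEdge_of_tourSeq_eq hxy] at hn hn' hfirst
  rcases mk_mem_und.1 hn with hmem | hmem
  · have hxy_tail := (hD.mono hTD).isTailEdge_of_first_reached_at_tail hmem hxy hfirst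
    exact hn' (mk_mem_und.2 (.inl (htail hxy_tail)))
  · obtain ⟨m, hm, hyx⟩ := hT'.exists_lt_tourSeq_eq_tail hD hρ hb (hTD hmem)
      (Sym2.eq_swap ▸ hn') (tours_eq n le_rfl ▸ hxy)
    rw [← tours_eq m hm.le] at hyx
    exact hfirst m hm ((tourEdge_of_tourSeq_eq hyx).trans Sym2.eq_swap)

lemma IsJaegerTree.tourEdge_mem_und_iff (hT : IsJaegerTree ρ b0 b1 D T)
    (hT' : IsJaegerTree ρ b0 b1 D T') (hD : IsPartialOrientation G D) (hρ : IsRibbon G ρ)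
    (hb : G.Adj b0 b1) (htail : tailEdges b0 T ⊆ T') (htail' : tailEdges b0 T' ⊆ T) (n : ℕ) :
    tourEdge ρ (und T) b0 b1 n ∈ und T ↔ tourEdge ρ (und T) b0 b1 n ∈ und T' := by
  induction n using Nat.strong_induction_on with
  | _ n hagree =>
    have edges_eq : ∀ m ≤ n, tourEdge ρ (und T) b0 b1 m = tourEdge ρ (und T') b0 b1 m :=
      fun m hm => by
        rw [tourEdge, tourEdge, tourSeq_congr fun k hk => hagree k (hk.trans_le hm)]
    refine ⟨hT'.tourEdge_mem_und_of_agree hD hρ hb hT.1.1 htail hagree, ?_⟩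
    rw [edges_eq n le_rfl]
    refine hT.tourEdge_mem_und_of_agree hD hρ hb hT'.1.1 htail' fun m hm => ?_
    rw [← edges_eq m hm.le]
    exact (hagree m hm).symm

lemma IsJaegerTree.subset_of_tailEdges_subset (hT : IsJaegerTree ρ b0 b1 D T)
    (hT' : IsJaegerTree ρ b0 b1 D T') (hD : IsPartialOrientation G D) (hρ : IsRibbon G ρ)
    (hb : G.Adj b0 b1) (htail : tailEdges b0 T ⊆ T') (htail' : tailEdges b0 T' ⊆ T) : T ⊆ T' := by
  refine hD.subset_of_und_subset hT.1.1 hT'.1.1 ?_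
  rintro _ ⟨⟨x, y⟩, hxy, rfl⟩
  obtain ⟨n, hn⟩ := hT.1.mem_range_tourSeq hD hρ hb (hD.adj (hT.1.1 hxy))
  have hiff := hT.tourEdge_mem_und_iff hT' hD hρ hb htail htail' n
  rw [tourEdge_of_tourSeq_eq hn] at hiff
  exact hiff.1 ⟨_, hxy, rfl⟩

theorem stick_tree_stronger_uniqueness_general (hρ : IsRibbon G ρ) (hb : G.Adj b0 b1)
    {D' : Set (V × V)} (hD : IsFacetGraph G D) (hD' : IsFacetGraph G D')
    (hT : IsJaegerTree ρ b0 b1 D T) (hT' : IsJaegerTree ρ b0 b1 D' T')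
    (htail : tailEdges b0 T ⊆ T') (htail' : tailEdges b0 T' ⊆ T) : T = T' := by
  obtain ⟨l, hl, rfl⟩ := hD
  obtain ⟨l', hl', rfl⟩ := hD'
  have facets_eq : facetDigraph G l = facetDigraph G l' :=
    facetDigraph_eq_of_tailEdges_subset hl hl' hT.1.1 hT'.1.1 hT.1.2.connected hT'.1.2.connected
      (htail.trans hT'.1.1) (htail'.trans hT.1.1)
  rw [← facets_eq] at hT'
  have hor := isPartialOrientation_facetDigraph G l
  exact (hT.subset_of_tailEdges_subset hT' hor hρ hb htail htail').antisymm
    (hT'.subset_of_tailEdges_subset hT hor hρ hb htail' htail)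

end Jaeger

/-- If a Jaeger tree `T` contains the directed edges `e₁, …, e_r` and all tail-edges of `T`
are among them, then no Jaeger tree other than possibly `T` has `{e₁, …, e_r}` as its set of
tail-edges. -/
theorem stick_tree_stronger_uniqueness
    {V : Type*} [Fintype V] [DecidableEq V]
    (G : SimpleGraph V) (hG : G.Connected)
    (ρ : V → V → V) (hrib : IsRibbon G ρ) (b0 b1 : V) (hb : G.Adj b0 b1)
    (J : Set (Set (V × V)))
    (hJ : J = {T | ∃ D : Set (V × V), IsFacetGraph G D ∧ IsJaegerTree ρ b0 b1 D T})
    (S : Finset (V × V)) (T : Set (V × V)) (hT : T ∈ J)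
    (hsub : ↑S ⊆ T) (htail : tailEdges b0 T ⊆ ↑S) :
    ∀ T' ∈ J, tailEdges b0 T' = ↑S → T' = T := by
  subst hJ
  obtain ⟨D, hD, hT⟩ := hT
  rintro T' ⟨D', hD', hT'⟩ hS
  exact stick_tree_stronger_uniqueness_general hrib hb hD' hD hT' hT (hS ▸ hsub)
    ((hS ▸ htail).trans fun _ hp => hp.1)

end SEP
end

section
/- For all nonnegative integers b, c, n with c ≤ b − 2n, the identity ∑_{a=0}^{n} binom(2a, a) · binom(b − 2a, n − a) = ∑_{a=0}^{n} binom(2a + c, a) · binom(b − c − 2a, n − a) holds. -/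
open scoped Classical Pointwise

namespace SEP

/-!
Put `F n x y = ∑ i + j = n, C(2i + x, i) * C(2j + y, j)`. Pascal's rule, applied to either factor,
gives `F (n + 1) (x + 1) y = F (n + 1) x y + F n (x + 2) y` and its mirror image in `y`. By
induction on `n` a unit can therefore be moved from `x` to `y`, so that
`F n 0 (b - 2n) = F n c (b - 2n - c)` for every integer `c`; these are the two sides of the
identity.
-/

section BinomialRing

variable {R : Type*} [CommRing R] [BinomialRing R]

/-- The convolution `∑ i + j = n, C(2i + x, i) * C(2j + y, j)` of two shifted sequences of central
binomial coefficients. The binomial coefficients are those of a binomial ring, so that the shifts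
can be arbitrary elements of `R`. -/
noncomputable def centralChooseConv (n : ℕ) (x y : R) : R :=
  ∑ p ∈ Finset.HasAntidiagonal.antidiagonal n,
    Ring.choose (2 * p.1 + x) p.1 * Ring.choose (2 * p.2 + y) p.2

theorem centralChooseConv_comm (n : ℕ) (x y : R) :
    centralChooseConv n x y = centralChooseConv n y x := by
  unfold centralChooseConv
  rw [← Finset.Nat.sum_antidiagonal_swap]
  exact Finset.sum_congr rfl fun p _ => mul_comm _ _

theorem choose_two_mul_succ_add_add_one (k : ℕ) (x : R) :
    Ring.choose (2 * (k + 1 : ℕ) + (x + 1)) (k + 1) =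
      Ring.choose (2 * (k + 1 : ℕ) + x) (k + 1) + Ring.choose (2 * k + (x + 2)) k := by
  have shift : (2 * k + (x + 2) : R) = 2 * (k + 1 : ℕ) + x := by push_cast; ring
  rw [← add_assoc, Ring.choose_succ_succ, add_comm, shift]

theorem centralChooseConv_succ_add_one_left (n : ℕ) (x y : R) :
    centralChooseConv (n + 1) (x + 1) y =
      centralChooseConv (n + 1) x y + centralChooseConv n (x + 2) y := by
  unfold centralChooseConv
  simp only [Finset.Nat.sum_antidiagonal_succ, choose_two_mul_succ_add_add_one, add_mul,
    Finset.sum_add_distrib, Ring.choose_zero_right, add_assoc]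

theorem centralChooseConv_succ_add_one_right (n : ℕ) (x y : R) :
    centralChooseConv (n + 1) x (y + 1) =
      centralChooseConv (n + 1) x y + centralChooseConv n x (y + 2) := by
  simp only [centralChooseConv_comm _ x, centralChooseConv_succ_add_one_left]

theorem centralChooseConv_add_one_left (n : ℕ) (x y : R) :
    centralChooseConv n (x + 1) y = centralChooseConv n x (y + 1) := by
  induction n generalizing x y with
  | zero => simp [centralChooseConv]
  | succ n ih =>
    have shift_two : centralChooseConv n (x + 2) y = centralChooseConv n x (y + 2) := by
      rw [← one_add_one_eq_two, ← add_assoc, ← add_assoc, ih, ih]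
    rw [centralChooseConv_succ_add_one_left, centralChooseConv_succ_add_one_right, shift_two]

theorem centralChooseConv_periodic (n : ℕ) (s : R) :
    Function.Periodic (fun x => centralChooseConv n x (s - x)) 1 := fun x => by
  simp only [centralChooseConv_add_one_left, sub_add_eq_sub_sub, sub_add_cancel]

theorem centralChooseConv_eq_sum_range (n : ℕ) (b x : R) :
    centralChooseConv n x (b - 2 * n - x) =
      ∑ a ∈ Finset.range (n + 1),
        Ring.choose (2 * a + x) a * Ring.choose (b - x - 2 * a) (n - a) := by
  unfold centralChooseConv
  rw [Finset.Nat.sum_antidiagonal_eq_sum_range_succ_mk]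
  refine Finset.sum_congr rfl fun a ha => ?_
  have reindex : 2 * ((n - a : ℕ) : R) + (b - 2 * n - x) = b - x - 2 * a := by
    rw [Nat.cast_sub (Finset.mem_range_succ_iff.mp ha)]
    ring
  rw [reindex]

variable (R) in
theorem cast_sum_choose_mul_choose {b c n : ℕ} (h : 2 * n + c ≤ b) :
    ((∑ a ∈ Finset.range (n + 1), (2 * a + c).choose a * (b - c - 2 * a).choose (n - a) : ℕ) : R) =
      ∑ a ∈ Finset.range (n + 1),
        Ring.choose (2 * a + c : R) a * Ring.choose (b - c - 2 * a : R) (n - a) := by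
  rw [Nat.cast_sum]
  refine Finset.sum_congr rfl fun a ha => ?_
  have ha : a ≤ n := Finset.mem_range_succ_iff.mp ha
  have cast_top : ((b - c - 2 * a : ℕ) : R) = b - c - 2 * a := by
    rw [Nat.cast_sub (by lia), Nat.cast_sub (by lia), Nat.cast_mul, Nat.cast_ofNat]
  rw [Nat.cast_mul, ← Ring.choose_natCast, ← Ring.choose_natCast, cast_top, Nat.cast_add,
    Nat.cast_mul, Nat.cast_ofNat]

theorem binomial_identity_general (n : ℕ) (b : R) (c : ℤ) :
    ∑ a ∈ Finset.range (n + 1), Ring.choose (2 * a : R) a * Ring.choose (b - 2 * a) (n - a) =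
      ∑ a ∈ Finset.range (n + 1),
        Ring.choose (2 * a + c : R) a * Ring.choose (b - c - 2 * a) (n - a) := by
  have shift : centralChooseConv n (c : R) (b - 2 * n - c) =
      centralChooseConv n 0 (b - 2 * n - 0) := by
    simpa only [mul_one] using (centralChooseConv_periodic n (b - 2 * n)).int_mul_eq c
  rw [centralChooseConv_eq_sum_range, centralChooseConv_eq_sum_range] at shift
  simpa only [add_zero, sub_zero] using shift.symm

end BinomialRing

/-- For all nonnegative integers `b c n` with `2n + c ≤ b`,
`∑_{a=0}^{n} C(2a, a) C(b − 2a, n − a) = ∑_{a=0}^{n} C(2a + c, a) C(b − c − 2a, n − a)`. -/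
theorem binomial_identity (b c n : ℕ) (h : 2 * n + c ≤ b) :
    ∑ a ∈ Finset.range (n + 1), Nat.choose (2 * a) a * Nat.choose (b - 2 * a) (n - a) =
      ∑ a ∈ Finset.range (n + 1),
        Nat.choose (2 * a + c) a * Nat.choose (b - c - 2 * a) (n - a) := by
  have unshifted := cast_sum_choose_mul_choose ℤ (c := 0) (by lia : 2 * n + 0 ≤ b)
  simp only [add_zero, Nat.sub_zero, Nat.cast_zero, sub_zero] at unshifted
  exact_mod_cast unshifted.trans
    ((binomial_identity_general n (b : ℤ) c).trans (cast_sum_choose_mul_choose ℤ h).symm)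

end SEP
end

section
/- Let C_n be the cycle graph on vertices v_0, …, v_{n−1} (n ≥ 3) with edges v_i v_{i+1} (indices modulo n), with its (unique) ribbon structure and the basis (v_0, v_0v_1). For each fixed i with 0 ≤ i ≤ ⌊(n−1)/2⌋, the total number of Jaeger trees with exactly i tail-edges, summed over all facet graphs of C_n, equals ∑_{j=0}^{i} binom(2j, j) · binom(n − 1 − 2j, i − j). -/
open scoped Classical Pointwise

/-!
Cut the cycle at the edge `k` missing from the tree and record the directions of its edges as
signs `δ : ZMod n → {-1, 0, 1}`; the layers close up exactly when the signs add up to zero. The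
tour follows the edges `0, 1, …, k - 1` and so reaches edge `k` first at its endpoint `k`: the
tree is a Jaeger tree if and only if `δ k ≠ -1`. Hence `δ k` is determined by the parity of `n`,
and if `a` tail-edges come before `k` and `b` after it, then the vanishing of the sum forces
`k = n / 2 + a - b`. Choosing the tail-edges gives `∑ C(p + 2a, a) C(q + 2b, b)` over `a + b = i`
with `p = n / 2 - i` and `q = (n - 1) / 2 - i`. By Pascal's rule this convolution of Jensen depends
on `p` and `q` only through `p + q`, and it may be evaluated at `p = 0`.
-/

namespace SEP

section JensenConvolution

/-- Jensen's convolution `∑ C(p + r a, a) C(q + r b, b)` over `a + b = i`. -/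
def jensenSum (r p q i : ℕ) : ℕ :=
  ∑ x ∈ Finset.HasAntidiagonal.antidiagonal i,
    (p + r * x.1).choose x.1 * (q + r * x.2).choose x.2

theorem jensenSum_zero (r p q : ℕ) : jensenSum r p q 0 = 1 := by
  simp [jensenSum]

theorem jensenSum_comm (r p q i : ℕ) : jensenSum r p q i = jensenSum r q p i := by
  unfold jensenSum
  rw [← Finset.Nat.sum_antidiagonal_swap]
  exact Finset.sum_congr rfl fun x _ => mul_comm _ _

theorem jensenSum_succ_left (r p q i : ℕ) :
    jensenSum r (p + 1) q (i + 1) = jensenSum r p q (i + 1) + jensenSum r (p + r) q i := by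
  have pascal (a : ℕ) : (p + 1 + r * (a + 1)).choose (a + 1) =
      (p + r * (a + 1)).choose (a + 1) + (p + r + r * a).choose a := by
    rw [add_right_comm p, Nat.choose_succ_succ', add_comm, mul_add_one, add_right_comm p r,
      add_assoc p]
  simp only [jensenSum, Finset.Nat.sum_antidiagonal_succ, pascal, add_mul,
    Finset.sum_add_distrib, Nat.choose_zero_right]
  exact (add_assoc _ _ _).symm

theorem jensenSum_succ_right (r p q i : ℕ) :
    jensenSum r p (q + 1) (i + 1) = jensenSum r p q (i + 1) + jensenSum r p (q + r) i := by
  rw [jensenSum_comm, jensenSum_succ_left, jensenSum_comm r q, jensenSum_comm r (q + r)]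

theorem jensenSum_eq_jensenSum_zero_add (r p q i : ℕ) :
    jensenSum r p q i = jensenSum r 0 (p + q) i := by
  induction i generalizing p q with
  | zero => simp only [jensenSum_zero]
  | succ i ih =>
    induction p with
    | zero => rw [zero_add]
    | succ p ihp =>
      rw [jensenSum_succ_left, ihp, ih, add_right_comm p 1, jensenSum_succ_right,
        add_right_comm p r]

end JensenConvolution

section CyclicIndices

variable {n : ℕ} [NeZero n]

theorem val_add_one_eq_ite (u : ZMod n) :
    (u + 1).val = if u.val + 1 = n then 0 else u.val + 1 := by
  have hu := ZMod.val_lt u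
  rw [ZMod.val_add, ZMod.val_one_eq_one_mod, Nat.add_mod_mod]
  split_ifs with hlast
  · rw [hlast, Nat.mod_self]
  · exact Nat.mod_eq_of_lt (by omega)

theorem sum_val {M : Type*} [AddCommMonoid M] (f : ℕ → M) :
    ∑ e : ZMod n, f e.val = ∑ j ∈ Finset.range n, f j := by
  have image_val : (Finset.univ : Finset (ZMod n)).image ZMod.val = Finset.range n := by
    ext j
    simp only [Finset.mem_image, Finset.mem_univ, true_and, Finset.mem_range]
    exact ⟨fun ⟨e, he⟩ => he ▸ ZMod.val_lt e, fun hj => ⟨j, ZMod.val_natCast_of_lt hj⟩⟩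
  rw [← image_val, Finset.sum_image fun _ _ _ _ h => ZMod.val_injective n h]

theorem exists_forall_sub_eq_iff_sum_eq_zero {M : Type*} [AddCommGroup M] (f : ZMod n → M) :
    (∃ l : ZMod n → M, ∀ e, l (e + 1) - l e = f e) ↔ ∑ e, f e = 0 := by
  constructor
  · rintro ⟨l, hl⟩
    have shift : ∑ e, l (e + 1) = ∑ e, l e := Equiv.sum_comp (Equiv.addRight (1 : ZMod n)) l
    simp only [← hl, Finset.sum_sub_distrib, shift, sub_self]
  · intro hf
    have hrange : ∑ j ∈ Finset.range n, f (j : ZMod n) = 0 := by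
      rw [← hf, ← sum_val]
      simp only [ZMod.natCast_zmod_val]
    refine ⟨fun v => ∑ j ∈ Finset.range v.val, f (j : ZMod n), fun e => ?_⟩
    have hsucc : ∑ j ∈ Finset.range (e + 1).val, f (j : ZMod n) =
        ∑ j ∈ Finset.range (e.val + 1), f (j : ZMod n) := by
      rw [val_add_one_eq_ite]
      split_ifs with hlast
      · rw [hlast, hrange, Finset.range_zero, Finset.sum_empty]
      · rfl
    beta_reduce
    rw [hsucc, Finset.sum_range_succ, ZMod.natCast_zmod_val, add_sub_cancel_left]

/-- The edge indices met before `k` when going around the cycle from `0`. -/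
def before (k : ZMod n) : Finset (ZMod n) := {e | e.val < k.val}

/-- The edge indices met after `k` when going around the cycle from `0`. -/
def after (k : ZMod n) : Finset (ZMod n) := {e | k.val < e.val}

@[simp]
theorem mem_before {k e : ZMod n} : e ∈ before k ↔ e.val < k.val := by
  simp [before]

@[simp]
theorem mem_after {k e : ZMod n} : e ∈ after k ↔ k.val < e.val := by
  simp [after]

theorem compl_singleton_eq_before_disjUnion_after (k : ZMod n) :
    ({k}ᶜ : Finset (ZMod n)) = (before k).disjUnion (after k)
      (Finset.disjoint_left.2 fun e => by simpa using le_of_lt) := by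
  ext e
  simp only [Finset.mem_compl, Finset.mem_singleton, Finset.mem_disjUnion, mem_before, mem_after,
    ← (ZMod.val_injective n).eq_iff (a := e), ← ne_eq, ne_iff_lt_or_gt]

theorem sum_eq_add_sum_before_add_sum_after {M : Type*} [AddCommMonoid M] (f : ZMod n → M)
    (k : ZMod n) : ∑ e, f e = f k + (∑ e ∈ before k, f e + ∑ e ∈ after k, f e) := by
  rw [Fintype.sum_eq_add_sum_compl k, compl_singleton_eq_before_disjUnion_after,
    Finset.sum_disjUnion]

theorem card_before (k : ZMod n) : (before k).card = k.val := by
  have hk := ZMod.val_lt k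
  have filter_lt : {j ∈ Finset.range n | j < k.val} = Finset.range k.val := by
    ext j
    simp only [Finset.mem_filter, Finset.mem_range]
    omega
  rw [before, Finset.card_filter, sum_val fun j => if j < k.val then 1 else 0,
    ← Finset.card_filter, filter_lt, Finset.card_range]

theorem card_after (k : ZMod n) : (after k).card = n - 1 - k.val := by
  have htotal := sum_eq_add_sum_before_add_sum_after (fun _ => 1) k
  simp only [← Finset.card_eq_sum_ones, card_before, Finset.card_univ, ZMod.card] at htotal
  omega

end CyclicIndices

section SignPatterns

theorem signType_ne_zero_iff {s : SignType} : s ≠ 0 ↔ s = 1 ∨ s = -1 := by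
  decide +revert

theorem coe_sign_eq_self {x : ℤ} (hx : |x| ≤ 1) : (SignType.sign x : ℤ) = x := by
  obtain ⟨h₁, h₂⟩ := abs_le.1 hx
  interval_cases x <;> rfl

theorem support_update_zero_eq_compl_singleton {ι M : Type*} [DecidableEq ι] [Zero M]
    {f : ι → M} {k : ι} (hf : ∀ e ≠ k, f e ≠ 0) :
    Function.support (Function.update f k 0) = {k}ᶜ := by
  rw [Function.support_update_zero, Set.compl_eq_univ_sdiff]
  exact Set.Subset.antisymm (Set.sdiff_subset_sdiff_left (Set.subset_univ _))
    fun e he => ⟨hf e he.2, he.2⟩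

theorem sum_sign_eq_card_sub_card {ι : Type*} (δ : ι → SignType) (s : Finset ι) :
    ∑ e ∈ s, (δ e : ℤ) = ({e ∈ s | δ e = 1}.card : ℤ) - {e ∈ s | δ e = -1}.card := by
  have cast_eq (a : SignType) :
      (a : ℤ) = (if a = 1 then 1 else 0) - if a = -1 then 1 else 0 := by
    decide +revert
  simp only [cast_eq, Finset.sum_sub_distrib, Finset.sum_boole]

theorem card_filter_pos_add_card_filter_neg {ι : Type*} {δ : ι → SignType} {s : Finset ι}
    (hδ : ∀ e ∈ s, δ e ≠ 0) : {e ∈ s | δ e = 1}.card + {e ∈ s | δ e = -1}.card = s.card := by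
  have neg_iff {e : ι} (he : e ∈ s) : δ e = -1 ↔ ¬δ e = 1 := by
    rcases signType_ne_zero_iff.1 (hδ e he) with h | h <;> simp [h]
  rw [Finset.filter_congr fun e he => neg_iff he, Finset.card_filter_add_card_filter_not]

variable {n : ℕ}

/-- The sign pattern with value `s` at `k` and prescribed tails `A` before and `B` after `k`. -/
noncomputable def signsOfTails (s : SignType) (k : ZMod n) (A B : Finset (ZMod n)) (e : ZMod n) :
    SignType :=
  if e = k then s else if e.val < k.val then if e ∈ A then 1 else -1 else if e ∈ B then -1 else 1

theorem signsOfTails_self (s : SignType) (k : ZMod n) (A B : Finset (ZMod n)) :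
    signsOfTails s k A B k = s :=
  if_pos rfl

theorem signsOfTails_ne_zero (s : SignType) {k e : ZMod n} (A B : Finset (ZMod n)) (he : e ≠ k) :
    signsOfTails s k A B e ≠ 0 := by
  rw [signsOfTails, if_neg he]
  split_ifs <;> decide

variable [NeZero n]

/-- With edge `k` removed from the cycle, the positively oriented edges before `k`: these are
the tail-edges on the branch leaving `0` in the positive direction. -/
def tailsBefore (δ : ZMod n → SignType) (k : ZMod n) : Finset (ZMod n) :=
  {e ∈ before k | δ e = 1}

/-- With edge `k` removed from the cycle, the negatively oriented edges after `k`: these are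
the tail-edges on the branch leaving `0` in the negative direction. -/
def tailsAfter (δ : ZMod n → SignType) (k : ZMod n) : Finset (ZMod n) :=
  {e ∈ after k | δ e = -1}

theorem sum_sign_eq_of_ne_zero {δ : ZMod n → SignType} {k : ZMod n} (hδ : ∀ e ≠ k, δ e ≠ 0) :
    ∑ e, (δ e : ℤ) = δ k + (2 * (tailsBefore δ k).card - k.val) +
      ((n - 1 - k.val) - 2 * (tailsAfter δ k).card) := by
  have hk := ZMod.val_lt k
  have card_low : (tailsBefore δ k).card + {e ∈ before k | δ e = -1}.card = k.val := by
    rw [tailsBefore, card_filter_pos_add_card_filter_neg, card_before]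
    rintro e he
    exact hδ e fun h => by simp [h] at he
  have card_high : {e ∈ after k | δ e = 1}.card + (tailsAfter δ k).card = n - 1 - k.val := by
    rw [tailsAfter, card_filter_pos_add_card_filter_neg, card_after]
    rintro e he
    exact hδ e fun h => by simp [h] at he
  rw [sum_eq_add_sum_before_add_sum_after _ k, sum_sign_eq_card_sub_card,
    sum_sign_eq_card_sub_card, ← tailsBefore, ← tailsAfter]
  omega

theorem tailsBefore_signsOfTails (s : SignType) {k : ZMod n} {A : Finset (ZMod n)}
    (B : Finset (ZMod n)) (hA : A ⊆ before k) : tailsBefore (signsOfTails s k A B) k = A := by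
  have sign_eq {e : ZMod n} (he : e ∈ before k) :
      signsOfTails s k A B e = 1 ↔ e ∈ A := by
    rw [mem_before] at he
    have hek : e ≠ k := ne_of_apply_ne ZMod.val he.ne
    simp [signsOfTails, hek, he]
  rw [tailsBefore, Finset.filter_congr fun e he => sign_eq he, Finset.filter_mem_eq_inter,
    Finset.inter_eq_right.2 hA]

theorem tailsAfter_signsOfTails (s : SignType) {k : ZMod n} (A : Finset (ZMod n))
    {B : Finset (ZMod n)} (hB : B ⊆ after k) : tailsAfter (signsOfTails s k A B) k = B := by
  have sign_eq {e : ZMod n} (he : e ∈ after k) :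
      signsOfTails s k A B e = -1 ↔ e ∈ B := by
    rw [mem_after] at he
    have hek : e ≠ k := ne_of_apply_ne ZMod.val he.ne'
    simp [signsOfTails, hek, he.not_gt]
  rw [tailsAfter, Finset.filter_congr fun e he => sign_eq he, Finset.filter_mem_eq_inter,
    Finset.inter_eq_right.2 hB]

theorem signsOfTails_tails {δ : ZMod n → SignType} {k : ZMod n} (hδ : ∀ e ≠ k, δ e ≠ 0) :
    signsOfTails (δ k) k (tailsBefore δ k) (tailsAfter δ k) = δ := by
  ext e
  by_cases hek : e = k
  · rw [hek, signsOfTails_self]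
  have hval : e.val ≠ k.val := (ZMod.val_injective n).ne hek
  rcases hval.lt_or_gt with hlt | hlt <;> rcases signType_ne_zero_iff.1 (hδ e hek) with h | h <;>
    simp [signsOfTails, tailsBefore, tailsAfter, hek, hlt, hlt.not_gt, h]

theorem card_signs_with_tails (s : SignType) (k : ZMod n) (a b : ℕ) :
    (Finset.univ.filter fun δ : ZMod n → SignType => (∀ e ≠ k, δ e ≠ 0) ∧ δ k = s ∧
      (tailsBefore δ k).card = a ∧ (tailsAfter δ k).card = b).card =
      k.val.choose a * (n - 1 - k.val).choose b := by
  rw [← card_after, ← card_before, ← Finset.card_powersetCard, ← Finset.card_powersetCard,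
    ← Finset.card_product]
  refine Finset.card_nbij' (fun δ => (tailsBefore δ k, tailsAfter δ k))
    (fun AB => signsOfTails s k AB.1 AB.2) ?_ ?_ ?_ ?_
  · intro δ hδ
    obtain ⟨-, -, ha, hb⟩ := (Finset.mem_filter.1 hδ).2
    simp only [Finset.coe_product, Set.mem_prod, Finset.mem_coe, Finset.mem_powersetCard]
    exact ⟨⟨Finset.filter_subset _ _, ha⟩, Finset.filter_subset _ _, hb⟩
  · rintro ⟨A, B⟩ hAB
    simp only [Finset.coe_product, Set.mem_prod, Finset.mem_coe, Finset.mem_powersetCard] at hAB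
    obtain ⟨⟨hA, ha⟩, hB, hb⟩ := hAB
    simp only [Finset.coe_filter, Finset.mem_univ, true_and, Set.mem_ofPred_eq]
    exact ⟨fun e => signsOfTails_ne_zero s A B, signsOfTails_self s k A B,
      by rw [tailsBefore_signsOfTails s B hA, ha], by rw [tailsAfter_signsOfTails s A hB, hb]⟩
  · intro δ hδ
    obtain ⟨hne, rfl, -, -⟩ := (Finset.mem_filter.1 hδ).2
    exact signsOfTails_tails hne
  · rintro ⟨A, B⟩ hAB
    simp only [Finset.coe_product, Set.mem_prod, Finset.mem_coe, Finset.mem_powersetCard] at hAB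
    obtain ⟨⟨hA, -⟩, hB, -⟩ := hAB
    exact Prod.ext (tailsBefore_signsOfTails s B hA) (tailsAfter_signsOfTails s A hB)

end SignPatterns

section JaegerCodes

variable {n : ℕ} [NeZero n]

/-- The pairs encoding a facet graph of the cycle together with one of its Jaeger trees: `δ e` is
the direction of the edge `e` (`0` if hidden) and `k` is the edge missing from the tree. -/
structure IsJaegerCode (k : ZMod n) (δ : ZMod n → SignType) : Prop where
  sum_eq_zero : ∑ e, (δ e : ℤ) = 0
  ne_zero : ∀ e ≠ k, δ e ≠ 0
  ne_neg_one : δ k ≠ -1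

/-- The sign of the edge missing from the tree of a Jaeger code: it is hidden exactly when `n` is
odd, since the signs add up to zero. -/
def missingSign (n : ℕ) : SignType := if Even n then 1 else 0

theorem isJaegerCode_iff {k : ZMod n} {δ : ZMod n → SignType} {p : ℕ}
    (hp : p + ((tailsBefore δ k).card + (tailsAfter δ k).card) = n / 2) :
    IsJaegerCode k δ ↔ k.val = p + 2 * (tailsBefore δ k).card ∧
      (∀ e ≠ k, δ e ≠ 0) ∧ δ k = missingSign n := by
  have sum_iff (hδ : ∀ e ≠ k, δ e ≠ 0) : IsJaegerCode k δ ↔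
      δ k ≠ -1 ∧ (δ k : ℤ) + (n - 1) + 2 * (tailsBefore δ k).card =
        2 * (tailsAfter δ k).card + 2 * k.val := by
    have hsum := sum_sign_eq_of_ne_zero hδ
    exact ⟨fun h => ⟨h.ne_neg_one, by linarith [h.sum_eq_zero]⟩,
      fun ⟨hneg, h⟩ => ⟨by linarith [h], hδ, hneg⟩⟩
  have missing_eq : missingSign n = if n % 2 = 0 then 1 else 0 := by
    simp only [missingSign, Nat.even_iff]
  by_cases hδ : ∀ e ≠ k, δ e ≠ 0
  · rw [sum_iff hδ, missing_eq, and_iff_right hδ]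
    rcases SignType.trichotomy (δ k) with h | h | h <;> rw [h] <;> split_ifs <;>
      simp [-ZMod.natCast_val] <;> omega
  · exact iff_of_false (fun h => hδ h.ne_zero) fun h => hδ h.2.1

theorem card_jaegerCodes_with_tails {a b : ℕ} (hab : a + b ≤ (n - 1) / 2) :
    (Finset.univ.filter fun c : ZMod n × (ZMod n → SignType) => IsJaegerCode c.1 c.2 ∧
      (tailsBefore c.2 c.1).card = a ∧ (tailsAfter c.2 c.1).card = b).card =
      (n / 2 - (a + b) + 2 * a).choose a * ((n - 1) / 2 - (a + b) + 2 * b).choose b := by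
  have hn := NeZero.pos n
  obtain ⟨k, hk⟩ : ∃ k : ZMod n, k.val = n / 2 - (a + b) + 2 * a :=
    ⟨_, ZMod.val_natCast_of_lt (by omega)⟩
  have hk' : n - 1 - k.val = (n - 1) / 2 - (a + b) + 2 * b := by omega
  rw [eq_comm, ← hk, ← hk', ← card_signs_with_tails (missingSign n) k, ← one_mul (Finset.card _),
    ← Finset.card_singleton k, ← Finset.card_product]
  refine congrArg Finset.card (Finset.ext fun ⟨k', δ⟩ => ?_)
  simp only [Finset.mem_filter, Finset.mem_univ, true_and, Finset.mem_product,
    Finset.mem_singleton]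
  constructor
  · rintro ⟨rfl, hδ, hmissing, ha, hb⟩
    have hcode := (isJaegerCode_iff (p := n / 2 - (a + b)) (by omega)).2
      ⟨by omega, hδ, hmissing⟩
    exact ⟨hcode, ha, hb⟩
  · rintro ⟨hcode, ha, hb⟩
    obtain ⟨hval, hδ, hmissing⟩ := (isJaegerCode_iff (p := n / 2 - (a + b)) (by omega)).1 hcode
    obtain rfl : k' = k := ZMod.val_injective n (by omega)
    exact ⟨rfl, hδ, hmissing, ha, hb⟩

theorem card_jaegerCodes {i : ℕ} (hi : i ≤ (n - 1) / 2) :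
    (Finset.univ.filter fun c : ZMod n × (ZMod n → SignType) => IsJaegerCode c.1 c.2 ∧
      (tailsBefore c.2 c.1).card + (tailsAfter c.2 c.1).card = i).card =
      jensenSum 2 (n / 2 - i) ((n - 1) / 2 - i) i := by
  rw [jensenSum, Finset.card_eq_sum_card_fiberwise
    (f := fun c => ((tailsBefore c.2 c.1).card, (tailsAfter c.2 c.1).card))
    (t := Finset.HasAntidiagonal.antidiagonal i) fun c hc =>
      Finset.HasAntidiagonal.mem_antidiagonal.2 (Finset.mem_filter.1 hc).2.2]
  refine Finset.sum_congr rfl fun ⟨a, b⟩ hab => ?_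
  obtain rfl : a + b = i := Finset.HasAntidiagonal.mem_antidiagonal.1 hab
  rw [← card_jaegerCodes_with_tails hi, Finset.filter_filter]
  refine congrArg Finset.card (Finset.filter_congr fun c _ => ?_)
  rw [Prod.mk.injEq, and_assoc, and_congr_right_iff]
  exact fun _ => and_iff_right_of_imp fun ⟨ha, hb⟩ => by rw [ha, hb]

theorem card_jaegerCodes_eq_sum_choose {i : ℕ} (hi : i ≤ (n - 1) / 2) :
    (Finset.univ.filter fun c : ZMod n × (ZMod n → SignType) => IsJaegerCode c.1 c.2 ∧
      (tailsBefore c.2 c.1).card + (tailsAfter c.2 c.1).card = i).card =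
      ∑ j ∈ Finset.range (i + 1), (2 * j).choose j * (n - 1 - 2 * j).choose (i - j) := by
  rw [card_jaegerCodes hi, jensenSum_eq_jensenSum_zero_add, jensenSum,
    Finset.Nat.sum_antidiagonal_eq_sum_range_succ_mk]
  refine Finset.sum_congr rfl fun j hj => ?_
  rw [Finset.mem_range] at hj
  dsimp only
  congr 2 <;> omega

end JaegerCodes

section CycleSubgraphs

variable {n : ℕ}

/-- The spanning subgraph of the cycle whose edges are the `{e, e + 1}` with `e ∈ S`. -/
def cycleSubgraph (S : Set (ZMod n)) : SimpleGraph (ZMod n) :=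
  SimpleGraph.fromRel fun u v => v = u + 1 ∧ u ∈ S

variable [Fact (3 ≤ n)]

theorem add_one_add_one_ne (e : ZMod n) : e + 1 + 1 ≠ e := by
  have hn : 3 ≤ n := Fact.out
  rw [add_assoc, one_add_one_eq_two, ne_eq, add_eq_left]
  intro h
  have hdvd := (ZMod.natCast_eq_zero_iff 2 n).1 (by exact_mod_cast h)
  exact absurd (Nat.le_of_dvd two_pos hdvd) (by omega)

theorem add_one_ne (e : ZMod n) : e + 1 ≠ e := fun h =>
  add_one_add_one_ne e (by rw [h, h])

theorem sym2_mk_add_one_injective : Function.Injective fun e : ZMod n => s(e, e + 1) := by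
  intro e f h
  rcases Sym2.eq_iff.1 h with ⟨h, -⟩ | ⟨rfl, h⟩
  · exact h
  · exact absurd h (add_one_add_one_ne f)

theorem cycleSubgraph_adj {S : Set (ZMod n)} {u v : ZMod n} :
    (cycleSubgraph S).Adj u v ↔ v = u + 1 ∧ u ∈ S ∨ u = v + 1 ∧ v ∈ S := by
  rw [cycleSubgraph, SimpleGraph.fromRel_adj, and_iff_right_of_imp]
  rintro (⟨rfl, -⟩ | ⟨rfl, -⟩)
  · exact (add_one_ne u).symm
  · exact add_one_ne v

theorem edgeSet_cycleSubgraph (S : Set (ZMod n)) :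
    (cycleSubgraph S).edgeSet = (fun e => s(e, e + 1)) '' S := by
  ext e
  induction e with | _ u v
  simp only [SimpleGraph.mem_edgeSet, cycleSubgraph_adj, Set.mem_image, Sym2.eq_iff]
  constructor
  · rintro (⟨rfl, h⟩ | ⟨rfl, h⟩)
    · exact ⟨u, h, .inl ⟨rfl, rfl⟩⟩
    · exact ⟨v, h, .inr ⟨rfl, rfl⟩⟩
  · rintro ⟨e, h, ⟨rfl, rfl⟩ | ⟨rfl, rfl⟩⟩
    · exact .inl ⟨rfl, h⟩
    · exact .inr ⟨rfl, h⟩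

theorem ncard_edgeSet_cycleSubgraph (S : Set (ZMod n)) :
    (cycleSubgraph S).edgeSet.ncard = S.ncard := by
  rw [edgeSet_cycleSubgraph, Set.ncard_image_of_injective S sym2_mk_add_one_injective]

theorem cycleSubgraph_deleteEdges (S : Set (ZMod n)) (e : ZMod n) :
    (cycleSubgraph S).deleteEdges {s(e, e + 1)} = cycleSubgraph (S \ {e}) := by
  rw [← SimpleGraph.edgeSet_inj, SimpleGraph.edgeSet_deleteEdges, edgeSet_cycleSubgraph,
    edgeSet_cycleSubgraph, Set.image_sdiff sym2_mk_add_one_injective, Set.image_singleton]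

theorem reachable_add_natCast {S : Set (ZMod n)} {a : ZMod n} {m : ℕ}
    (h : ∀ j < m, a + (j : ZMod n) ∈ S) : (cycleSubgraph S).Reachable a (a + m) := by
  induction m with
  | zero => rw [Nat.cast_zero, add_zero]
  | succ m ih =>
    have hstep : (cycleSubgraph S).Adj (a + m) (a + m + 1) :=
      cycleSubgraph_adj.2 (.inl ⟨rfl, h m m.lt_succ_self⟩)
    rw [Nat.cast_succ, ← add_assoc]
    exact (ih fun j hj => h j (hj.trans m.lt_succ_self)).trans hstep.reachable

variable [NeZero n]

theorem connected_of_compl_singleton_subset {S : Set (ZMod n)} {k : ZMod n} (hS : {k}ᶜ ⊆ S) :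
    (cycleSubgraph S).Connected := by
  refine SimpleGraph.connected_iff_exists_forall_reachable _ |>.2 ⟨k + 1, fun v => ?_⟩
  have hv : v = k + 1 + ((v - (k + 1)).val : ZMod n) := by
    rw [ZMod.natCast_zmod_val, add_sub_cancel]
  rw [hv]
  refine reachable_add_natCast fun j hj => hS fun hjk => ?_
  have hj_zero : ((j + 1 : ℕ) : ZMod n) = 0 := by
    rw [Set.mem_singleton_iff, add_assoc, add_eq_left, add_comm] at hjk
    exact_mod_cast hjk
  have hdvd := Nat.le_of_dvd j.succ_pos ((ZMod.natCast_eq_zero_iff _ _).1 hj_zero)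
  have hlt := ZMod.val_lt (v - (k + 1))
  omega

theorem connected_cycleSubgraph_iff {S : Set (ZMod n)} :
    (cycleSubgraph S).Connected ↔ ∃ k, {k}ᶜ ⊆ S := by
  refine ⟨fun h => ?_, fun ⟨k, hk⟩ => connected_of_compl_singleton_subset hk⟩
  have hedges := h.card_vert_le_card_edgeSet_add_one
  have htotal := Set.ncard_add_ncard_compl S
  rw [Nat.card_coe_set_eq, ncard_edgeSet_cycleSubgraph] at hedges
  obtain ⟨k, hk⟩ := (Set.ncard_le_one_iff_subset_singleton (s := Sᶜ)).1 (by omega)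
  exact ⟨k, Set.compl_subset_comm.1 hk⟩

theorem isTree_cycleSubgraph_iff {S : Set (ZMod n)} :
    (cycleSubgraph S).IsTree ↔ ∃ k, S = {k}ᶜ := by
  have htotal := Set.ncard_add_ncard_compl S
  have hcard : S.ncard + 1 = Nat.card (ZMod n) ↔ ∃ k, S = {k}ᶜ := by
    simp only [eq_compl_comm (x := S), eq_comm (a := ({_} : Set (ZMod n))), ← Set.ncard_eq_one]
    omega
  rw [SimpleGraph.isTree_iff_connected_and_card, Nat.card_coe_set_eq,
    ncard_edgeSet_cycleSubgraph, hcard, connected_cycleSubgraph_iff, and_iff_right_of_imp]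
  exact fun ⟨k, hk⟩ => ⟨k, hk.ge⟩

theorem val_le_or_lt_val_of_reachable_zero {a b v : ZMod n}
    (h : (cycleSubgraph {a, b}ᶜ).Reachable 0 v) : v.val ≤ a.val ∨ b.val < v.val := by
  rw [SimpleGraph.reachable_iff_reflTransGen] at h
  induction h with
  | refl => exact .inl (ZMod.val_zero.trans_le (Nat.zero_le _))
  | @tail u w _ hadj ih =>
    have hb := ZMod.val_lt b
    have hval {x : ZMod n} (hx : x ∈ ({a, b} : Set (ZMod n))ᶜ) : x.val ≠ a.val ∧ x.val ≠ b.val := by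
      rw [Set.mem_compl_iff, Set.mem_insert_iff, Set.mem_singleton_iff, not_or] at hx
      exact ⟨(ZMod.val_injective n).ne hx.1, (ZMod.val_injective n).ne hx.2⟩
    rcases cycleSubgraph_adj.1 hadj with ⟨rfl, hu⟩ | ⟨rfl, hw⟩
    · have hu := hval hu
      rw [val_add_one_eq_ite]
      split_ifs <;> omega
    · have hw := hval hw
      rw [val_add_one_eq_ite] at ih
      split_ifs at ih <;> omega

theorem reachable_zero_iff {a b : ZMod n} (hab : a.val < b.val) (v : ZMod n) :
    (cycleSubgraph {a, b}ᶜ).Reachable 0 v ↔ v.val ≤ a.val ∨ b.val < v.val := by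
  refine ⟨val_le_or_lt_val_of_reachable_zero, ?_⟩
  have hb := ZMod.val_lt b
  have hv := ZMod.val_lt v
  have hmem {j : ℕ} (hj : j < n) (ha : j ≠ a.val) (hb : j ≠ b.val) :
      (j : ZMod n) ∈ ({a, b} : Set (ZMod n))ᶜ := by
    rintro (rfl | rfl)
    · exact ha (ZMod.val_natCast_of_lt hj).symm
    · exact hb (ZMod.val_natCast_of_lt hj).symm
  rintro (hva | hbv)
  · have hpath : (cycleSubgraph {a, b}ᶜ).Reachable 0 (0 + (v.val : ZMod n)) :=
      reachable_add_natCast fun j hj => by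
        rw [zero_add]
        exact hmem (by omega) (by omega) (by omega)
    rwa [zero_add, ZMod.natCast_zmod_val] at hpath
  · have hpath : (cycleSubgraph {a, b}ᶜ).Reachable v (v + (n - v.val : ℕ)) :=
      reachable_add_natCast fun j hj => by
        rw [← ZMod.natCast_zmod_val v, ← Nat.cast_add]
        exact hmem (by omega) (by omega) (by omega)
    rw [Nat.cast_sub hv.le, ZMod.natCast_self, ZMod.natCast_zmod_val, zero_sub,
      add_neg_cancel] at hpath
    exact hpath.symm

theorem reachable_zero_left_iff {k e : ZMod n} (he : e ≠ k) :
    (cycleSubgraph {k, e}ᶜ).Reachable 0 e ↔ e.val < k.val := by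
  rcases ((ZMod.val_injective n).ne he).lt_or_gt with h | h
  · rw [Set.pair_comm, reachable_zero_iff h]
    omega
  · rw [reachable_zero_iff h]
    omega

theorem reachable_zero_right_iff {k e : ZMod n} (he : e ≠ k) :
    (cycleSubgraph {k, e}ᶜ).Reachable 0 (e + 1) ↔ k.val < e.val := by
  have hk := ZMod.val_lt k
  rcases ((ZMod.val_injective n).ne he).lt_or_gt with h | h
  · rw [Set.pair_comm, reachable_zero_iff h, val_add_one_eq_ite]
    split_ifs <;> omega
  · rw [reachable_zero_iff h, val_add_one_eq_ite]
    split_ifs <;> omega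

end CycleSubgraphs

section Digraphs

variable {V : Type*}

theorem mem_und {T : Set (V × V)} {u v : V} : s(u, v) ∈ und T ↔ (u, v) ∈ T ∨ (v, u) ∈ T := by
  constructor
  · rintro ⟨⟨x, y⟩, h, he⟩
    rcases Sym2.eq_iff.1 he with ⟨rfl, rfl⟩ | ⟨rfl, rfl⟩
    · exact .inl h
    · exact .inr h
  · rintro (h | h)
    · exact ⟨_, h, rfl⟩
    · exact ⟨_, h, Sym2.eq_swap⟩

theorem fromDir_sdiff_singleton {T : Set (V × V)} {u v : V} (h : (v, u) ∉ T) :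
    fromDir (T \ {(u, v)}) = (fromDir T).deleteEdges {s(u, v)} := by
  ext x y
  simp only [fromDir, SimpleGraph.deleteEdges_adj, SimpleGraph.fromRel_adj, Set.mem_sdiff,
    Set.mem_singleton_iff, Prod.mk.injEq, Sym2.eq_iff]
  grind

end Digraphs

section Orientations

variable {n : ℕ}

/-- The digraph with the edge `e → e + 1` for `δ e = 1` and `e + 1 → e` for `δ e = -1`. -/
def orient (δ : ZMod n → SignType) : Set (ZMod n × ZMod n) :=
  {p | p.2 = p.1 + 1 ∧ δ p.1 = 1 ∨ p.1 = p.2 + 1 ∧ δ p.2 = -1}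

theorem mem_orient {δ : ZMod n → SignType} {u v : ZMod n} :
    (u, v) ∈ orient δ ↔ v = u + 1 ∧ δ u = 1 ∨ u = v + 1 ∧ δ v = -1 :=
  Iff.rfl

theorem orient_update_zero_subset (δ : ZMod n → SignType) (k : ZMod n) :
    orient (Function.update δ k 0) ⊆ orient δ := by
  have update_eq {e : ZMod n} {s : SignType} (hs : s ≠ 0) (h : Function.update δ k 0 e = s) :
      δ e = s := by
    rwa [Function.update_of_ne] at h
    rintro rfl
    exact hs (h.symm.trans (Function.update_self ..))
  rintro ⟨u, v⟩ (⟨hv, hu⟩ | ⟨hu, hv⟩)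
  · exact .inl ⟨hv, update_eq (by decide) hu⟩
  · exact .inr ⟨hu, update_eq (by decide) hv⟩

variable [Fact (3 ≤ n)]

theorem forward_mem_orient {δ : ZMod n → SignType} {e : ZMod n} :
    (e, e + 1) ∈ orient δ ↔ δ e = 1 := by
  simp [mem_orient, (add_one_add_one_ne e).symm]

theorem backward_mem_orient {δ : ZMod n → SignType} {e : ZMod n} :
    (e + 1, e) ∈ orient δ ↔ δ e = -1 := by
  simp [mem_orient, (add_one_add_one_ne e).symm]

theorem orient_injective : Function.Injective (orient : (ZMod n → SignType) → _) := by
  intro δ δ' h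
  ext e
  have hpos : δ e = 1 ↔ δ' e = 1 := by rw [← forward_mem_orient, h, forward_mem_orient]
  have hneg : δ e = -1 ↔ δ' e = -1 := by rw [← backward_mem_orient, h, backward_mem_orient]
  revert hpos hneg
  generalize δ e = s, δ' e = t
  decide +revert

theorem eq_orient_indicator {T : Set (ZMod n × ZMod n)} {δ : ZMod n → SignType}
    (hT : T ⊆ orient δ) :
    T = orient (Set.indicator {e | (e, e + 1) ∈ T ∨ (e + 1, e) ∈ T} δ) := by
  ext ⟨u, v⟩
  constructor
  · intro h
    rcases mem_orient.1 (hT h) with ⟨rfl, hu⟩ | ⟨rfl, hv⟩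
    · rw [forward_mem_orient, Set.indicator_of_mem (.inl h), hu]
    · rw [backward_mem_orient, Set.indicator_of_mem (.inr h), hv]
  · intro h
    rcases mem_orient.1 h with ⟨rfl, hu⟩ | ⟨rfl, hv⟩
    · have hmem := Set.mem_of_indicator_ne_zero (hu.trans_ne (by decide))
      rw [Set.indicator_of_mem hmem] at hu
      refine hmem.resolve_right fun hback => ?_
      simp [backward_mem_orient.1 (hT hback)] at hu
    · have hmem := Set.mem_of_indicator_ne_zero (hv.trans_ne (by decide))
      rw [Set.indicator_of_mem hmem] at hv
      refine hmem.resolve_left fun hforth => ?_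
      simp [forward_mem_orient.1 (hT hforth)] at hv

theorem mk_mem_und_orient {δ : ZMod n → SignType} {e : ZMod n} :
    s(e, e + 1) ∈ und (orient δ) ↔ δ e ≠ 0 := by
  rw [mem_und, forward_mem_orient, backward_mem_orient, signType_ne_zero_iff]

theorem fromDir_orient (δ : ZMod n → SignType) :
    fromDir (orient δ) = cycleSubgraph (Function.support δ) := by
  ext u v
  rw [cycleSubgraph_adj, fromDir, SimpleGraph.fromRel_adj, mem_orient, mem_orient,
    Function.mem_support, Function.mem_support, signType_ne_zero_iff, signType_ne_zero_iff]
  grind [add_one_ne]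

theorem facetDigraph_cycle {l : ZMod n → ℤ} {δ : ZMod n → SignType}
    (hl : ∀ e, l (e + 1) - l e = δ e) : facetDigraph (cycleSubgraph Set.univ) l = orient δ := by
  have hpos (e : ZMod n) : l (e + 1) - l e = 1 ↔ δ e = 1 := by
    rw [hl]
    generalize δ e = s
    decide +revert
  have hneg (e : ZMod n) : l e - l (e + 1) = 1 ↔ δ e = -1 := by
    rw [← neg_sub, hl]
    generalize δ e = s
    decide +revert
  ext ⟨u, v⟩
  simp only [facetDigraph, cycleSubgraph_adj, Set.mem_univ, and_true, Set.mem_ofPred_eq,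
    mem_orient, or_and_right]
  refine or_congr (and_congr_right ?_) (and_congr_right ?_)
  · rintro rfl
    exact hpos u
  · rintro rfl
    exact hneg v

theorem fromRel_adj_and_abs_sub_eq_one {l : ZMod n → ℤ} {δ : ZMod n → SignType}
    (hl : ∀ e, l (e + 1) - l e = δ e) :
    (SimpleGraph.fromRel fun u v => (cycleSubgraph Set.univ).Adj u v ∧ |l u - l v| = 1) =
      cycleSubgraph (Function.support δ) := by
  rw [← fromDir_orient, ← facetDigraph_cycle hl]
  ext u v
  simp only [fromDir, facetDigraph, SimpleGraph.fromRel_adj, Set.mem_ofPred_eq]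
  have habs : |l u - l v| = 1 ↔ l v - l u = 1 ∨ l u - l v = 1 := by
    rw [abs_eq zero_le_one]
    omega
  rw [SimpleGraph.adj_comm _ v u, abs_sub_comm (l v), or_self, ← and_or_left, habs]

variable [NeZero n]

theorem isLayering_cycle_iff {l : ZMod n → ℤ} {δ : ZMod n → SignType}
    (hl : ∀ e, l (e + 1) - l e = δ e) :
    IsLayering (cycleSubgraph Set.univ) l ↔ ∃ k, ∀ e ≠ k, δ e ≠ 0 := by
  have habs (e : ZMod n) : |l (e + 1) - l e| ≤ 1 := by
    rw [hl]
    generalize δ e = s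
    decide +revert
  have hconn : (cycleSubgraph (Function.support δ)).Connected ↔ ∃ k, ∀ e ≠ k, δ e ≠ 0 :=
    connected_cycleSubgraph_iff
  rw [← hconn, ← fromRel_adj_and_abs_sub_eq_one hl]
  refine ⟨IsLayering.conn, fun h => ⟨fun u v huv => ?_, h⟩⟩
  rcases cycleSubgraph_adj.1 huv with ⟨rfl, -⟩ | ⟨rfl, -⟩
  · rw [abs_sub_comm]
    exact habs u
  · exact habs v

theorem isFacetGraph_cycle_iff {D : Set (ZMod n × ZMod n)} :
    IsFacetGraph (cycleSubgraph Set.univ) D ↔ ∃ δ : ZMod n → SignType,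
      ∑ e, (δ e : ℤ) = 0 ∧ (∃ k, ∀ e ≠ k, δ e ≠ 0) ∧ D = orient δ := by
  constructor
  · rintro ⟨l, hlayer, rfl⟩
    have hsign (e : ZMod n) : l (e + 1) - l e = (SignType.sign (l (e + 1) - l e) : ℤ) :=
      (coe_sign_eq_self (hlayer.step (cycleSubgraph_adj.2 (.inr ⟨rfl, Set.mem_univ e⟩)))).symm
    exact ⟨_, (exists_forall_sub_eq_iff_sum_eq_zero _).1 ⟨l, hsign⟩,
      (isLayering_cycle_iff hsign).1 hlayer, facetDigraph_cycle hsign⟩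
  · rintro ⟨δ, hsum, hne, rfl⟩
    obtain ⟨l, hl⟩ := (exists_forall_sub_eq_iff_sum_eq_zero _).2 hsum
    exact ⟨l, (isLayering_cycle_iff hl).2 hne, (facetDigraph_cycle hl).symm⟩

theorem isSpanningTreeOf_orient_iff {δ : ZMod n → SignType} {T : Set (ZMod n × ZMod n)} :
    IsSpanningTreeOf T (orient δ) ↔
      ∃ k, (∀ e ≠ k, δ e ≠ 0) ∧ T = orient (Function.update δ k 0) := by
  constructor
  · rintro ⟨hT, htree⟩
    have hT_eq := eq_orient_indicator hT
    generalize {e | (e, e + 1) ∈ T ∨ (e + 1, e) ∈ T} = S at hT_eq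
    subst hT_eq
    rw [fromDir_orient, isTree_cycleSubgraph_iff, Set.support_indicator] at htree
    obtain ⟨k, hk⟩ := htree
    have hmem (e : ZMod n) : e ∈ S ∧ δ e ≠ 0 ↔ e ≠ k := Set.ext_iff.1 hk e
    refine ⟨k, fun e he => ((hmem e).2 he).2, congrArg orient (funext fun e => ?_)⟩
    by_cases he : e = k
    · have hzero : Set.indicator S δ e = 0 := by
        rw [← Function.notMem_support, Set.support_indicator, hk]
        simpa using he
      rw [hzero, he, Function.update_self]
    · rw [Function.update_of_ne he, Set.indicator_of_mem ((hmem e).2 he).1]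
  · rintro ⟨k, hδ, rfl⟩
    refine ⟨orient_update_zero_subset δ k, ?_⟩
    rw [fromDir_orient, support_update_zero_eq_compl_singleton hδ]
    exact isTree_cycleSubgraph_iff.2 ⟨k, rfl⟩

end Orientations

section Tours

variable {n : ℕ}

/-- The unique ribbon structure of the cycle graph. -/
def cycleRibbon (x y : ZMod n) : ZMod n := if y = x + 1 then x - 1 else x + 1

theorem cycleRibbon_add_one (x : ZMod n) : cycleRibbon x (x + 1) = x - 1 :=
  if_pos rfl

theorem tourSeq_succ_s17 {V : Type*} (ρ : V → V → V) (T : Set (Sym2 V)) (b0 b1 : V) (m : ℕ) :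
    tourSeq ρ T b0 b1 (m + 1) = tourStep ρ T (tourSeq ρ T b0 b1 m) :=
  Function.iterate_succ_apply' ..

theorem tourStep_backward {T : Set (Sym2 (ZMod n))} {e : ZMod n} (he : s(e, e + 1) ∈ T) :
    tourStep cycleRibbon T (e + 1, e) = (e, e - 1) := by
  rw [tourStep, if_pos (Sym2.eq_swap ▸ he), cycleRibbon_add_one]

theorem tourStep_turn {T : Set (Sym2 (ZMod n))} {e : ZMod n} (he : s(e, e + 1) ∉ T) :
    tourStep cycleRibbon T (e, e + 1) = (e, e - 1) := by
  rw [tourStep, if_neg he, cycleRibbon_add_one]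

variable [Fact (3 ≤ n)]

theorem tourStep_forward {T : Set (Sym2 (ZMod n))} {e : ZMod n} (he : s(e, e + 1) ∈ T) :
    tourStep cycleRibbon T (e, e + 1) = (e + 1, e + 1 + 1) := by
  rw [tourStep, if_pos he, cycleRibbon, if_neg (add_one_add_one_ne e).symm]

variable {T : Set (Sym2 (ZMod n))} {k : ZMod n}

theorem tourSeq_of_le (hT : ∀ e ≠ k, s(e, e + 1) ∈ T) {m : ℕ} (hm : m ≤ k.val) :
    tourSeq cycleRibbon T 0 1 m = ((m : ZMod n), (m : ZMod n) + 1) := by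
  induction m with
  | zero => simp [tourSeq]
  | succ m ih =>
    have hne : (m : ZMod n) ≠ k := by
      rintro rfl
      have hle := Nat.mod_le m n
      rw [ZMod.val_natCast] at hm
      omega
    rw [tourSeq_succ_s17, ih (by omega), tourStep_forward (hT _ hne), Nat.cast_succ]

variable [NeZero n]

theorem tourSeq_val_add_one_add (hT : ∀ e, s(e, e + 1) ∈ T ↔ e ≠ k) {j : ℕ} (hj : j < n) :
    tourSeq cycleRibbon T 0 1 (k.val + 1 + j) = (k - j, k - j - 1) := by
  induction j with
  | zero =>
    rw [add_zero, tourSeq_succ_s17, tourSeq_of_le (fun e => (hT e).2) le_rfl, ZMod.natCast_zmod_val,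
      tourStep_turn (by simp [hT]), Nat.cast_zero, sub_zero]
  | succ j ih =>
    have hne : k - (j + 1 : ℕ) ≠ k := by
      rw [ne_eq, sub_eq_self, ZMod.natCast_eq_zero_iff]
      exact Nat.not_dvd_of_pos_of_lt j.succ_pos hj
    have hpred : k - (j : ZMod n) = k - (j + 1 : ℕ) + 1 := by
      push_cast
      ring
    rw [← add_assoc, tourSeq_succ_s17, ih (by omega), hpred, add_sub_cancel_right,
      tourStep_backward ((hT _).2 hne)]

theorem firstVisit_missing_edge_lt (hT : ∀ e, s(e, e + 1) ∈ T ↔ e ≠ k) :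
    firstVisit cycleRibbon T 0 1 k (k + 1) < firstVisit cycleRibbon T 0 1 (k + 1) k := by
  have hfirst : firstVisit cycleRibbon T 0 1 k (k + 1) ≤ k.val := by
    refine Nat.sInf_le ?_
    rw [Set.mem_ofPred_eq, tourSeq_of_le (fun e => (hT e).2) le_rfl, ZMod.natCast_zmod_val]
  -- The infimum of an empty set of times would be `0`, so the tour must be shown to get there.
  have hvisited : tourSeq cycleRibbon T 0 1 (firstVisit cycleRibbon T 0 1 (k + 1) k) =
      (k + 1, k) := by
    refine Nat.sInf_mem (s := {m | tourSeq cycleRibbon T 0 1 m = (k + 1, k)})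
      ⟨k.val + 1 + (n - 1), ?_⟩
    have hn := NeZero.pos n
    rw [Set.mem_ofPred_eq, tourSeq_val_add_one_add hT (by omega), Nat.cast_pred hn,
      ZMod.natCast_self, zero_sub, sub_neg_eq_add, add_sub_cancel_right]
  refine hfirst.trans_lt (lt_of_not_ge fun hle => ?_)
  rw [tourSeq_of_le (fun e => (hT e).2) hle, Prod.mk.injEq] at hvisited
  exact add_one_add_one_ne k (by rw [← hvisited.1, hvisited.2])

theorem isJaegerTree_orient_iff {δ : ZMod n → SignType} (hδ : ∀ e ≠ k, δ e ≠ 0) :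
    IsJaegerTree cycleRibbon 0 1 (orient δ) (orient (Function.update δ k 0)) ↔ δ k ≠ -1 := by
  have hT (e : ZMod n) : s(e, e + 1) ∈ und (orient (Function.update δ k 0)) ↔ e ≠ k := by
    rw [mk_mem_und_orient, ← Function.mem_support, support_update_zero_eq_compl_singleton hδ,
      Set.mem_compl_singleton_iff]
  have hvisit := firstVisit_missing_edge_lt hT
  constructor
  · rintro ⟨-, hjaeger⟩ hk
    refine lt_asymm hvisit (hjaeger (k + 1, k) (backward_mem_orient.2 hk) ?_)
    rw [Sym2.eq_swap, hT, not_not]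
  · refine fun hk => ⟨isSpanningTreeOf_orient_iff.2 ⟨k, hδ, rfl⟩, ?_⟩
    rintro ⟨u, v⟩ hmem hmissing
    rcases mem_orient.1 hmem with ⟨rfl, -⟩ | ⟨rfl, hv⟩
    · rw [hT, not_not] at hmissing
      exact hmissing ▸ hvisit
    · rw [Sym2.eq_swap, hT, not_not] at hmissing
      exact absurd (hmissing ▸ hv) hk

end Tours

section TailEdges

variable {n : ℕ} [Fact (3 ≤ n)] {δ : ZMod n → SignType} {k : ZMod n}

theorem fromDir_orient_update_deleteEdges (hδ : ∀ e ≠ k, δ e ≠ 0) (e : ZMod n) :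
    (fromDir (orient (Function.update δ k 0))).deleteEdges {s(e, e + 1)} =
      cycleSubgraph {k, e}ᶜ := by
  rw [fromDir_orient, support_update_zero_eq_compl_singleton hδ, cycleSubgraph_deleteEdges,
    Set.sdiff_eq, ← Set.compl_union, Set.singleton_union]

variable [NeZero n]

theorem isTailEdge_forward_iff (hδ : ∀ e ≠ k, δ e ≠ 0) {e : ZMod n} :
    IsTailEdge 0 (orient (Function.update δ k 0)) (e, e + 1) ↔ e ∈ tailsBefore δ k := by
  rw [IsTailEdge, forward_mem_orient, tailsBefore, Finset.mem_filter, mem_before]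
  by_cases he : e = k
  · subst he
    simp
  have hreach (hpos : δ e = 1) :
      (fromDir (orient (Function.update δ k 0) \ {(e, e + 1)})).Reachable 0 e ↔
        e.val < k.val := by
    rw [fromDir_sdiff_singleton, fromDir_orient_update_deleteEdges hδ, reachable_zero_left_iff he]
    rw [backward_mem_orient, Function.update_of_ne he, hpos]
    decide
  rw [Function.update_of_ne he, and_comm, and_congr_left hreach]

theorem isTailEdge_backward_iff (hδ : ∀ e ≠ k, δ e ≠ 0) {e : ZMod n} :
    IsTailEdge 0 (orient (Function.update δ k 0)) (e + 1, e) ↔ e ∈ tailsAfter δ k := by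
  rw [IsTailEdge, backward_mem_orient, tailsAfter, Finset.mem_filter, mem_after]
  by_cases he : e = k
  · subst he
    simp
  have hreach (hneg : δ e = -1) :
      (fromDir (orient (Function.update δ k 0) \ {(e + 1, e)})).Reachable 0 (e + 1) ↔
        k.val < e.val := by
    rw [fromDir_sdiff_singleton, Sym2.eq_swap, fromDir_orient_update_deleteEdges hδ,
      reachable_zero_right_iff he]
    rw [forward_mem_orient, Function.update_of_ne he, hneg]
    decide
  rw [Function.update_of_ne he, and_comm, and_congr_left hreach]

theorem tailEdges_orient_update (hδ : ∀ e ≠ k, δ e ≠ 0) :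
    tailEdges 0 (orient (Function.update δ k 0)) =
      (fun e => (e, e + 1)) '' (tailsBefore δ k : Set (ZMod n)) ∪
        (fun e => (e + 1, e)) '' (tailsAfter δ k : Set (ZMod n)) := by
  ext ⟨u, v⟩
  constructor
  · intro h
    rcases mem_orient.1 h.1 with ⟨rfl, -⟩ | ⟨rfl, -⟩
    · exact .inl ⟨u, (isTailEdge_forward_iff hδ).1 h, rfl⟩
    · exact .inr ⟨v, (isTailEdge_backward_iff hδ).1 h, rfl⟩
  · rintro (⟨e, he, heq⟩ | ⟨e, he, heq⟩)
    · exact heq ▸ (isTailEdge_forward_iff hδ).2 he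
    · exact heq ▸ (isTailEdge_backward_iff hδ).2 he

theorem numTailEdges_orient_update (hδ : ∀ e ≠ k, δ e ≠ 0) :
    numTailEdges 0 (orient (Function.update δ k 0)) =
      (tailsBefore δ k).card + (tailsAfter δ k).card := by
  have hdisj : Disjoint ((fun e => (e, e + 1)) '' (tailsBefore δ k : Set (ZMod n)))
      ((fun e => (e + 1, e)) '' (tailsAfter δ k : Set (ZMod n))) := by
    rw [Set.disjoint_left]
    rintro _ ⟨e, -, rfl⟩ ⟨f, -, h⟩
    obtain ⟨rfl, h⟩ := Prod.mk.inj h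
    exact add_one_add_one_ne f h.symm
  rw [numTailEdges, tailEdges_orient_update hδ, Nat.card_coe_set_eq, Set.ncard_union_eq hdisj,
    Set.ncard_image_of_injective _ fun _ _ h => (Prod.mk.inj h).1,
    Set.ncard_image_of_injective _ fun _ _ h => (Prod.mk.inj h).2,
    Set.ncard_coe_finset, Set.ncard_coe_finset]

end TailEdges

theorem bijOn_jaegerCodes {n : ℕ} [Fact (3 ≤ n)] [NeZero n] (i : ℕ) :
    Set.BijOn (fun c : ZMod n × (ZMod n → SignType) =>
        (orient c.2, orient (Function.update c.2 c.1 0)))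
      {c | IsJaegerCode c.1 c.2 ∧ (tailsBefore c.2 c.1).card + (tailsAfter c.2 c.1).card = i}
      {q | IsFacetGraph (cycleSubgraph Set.univ) q.1 ∧ IsJaegerTree cycleRibbon 0 1 q.1 q.2 ∧
        numTailEdges 0 q.2 = i} := by
  refine ⟨?_, ?_, ?_⟩
  · rintro ⟨k, δ⟩ ⟨hcode, hcard⟩
    have hδ := hcode.ne_zero
    exact ⟨isFacetGraph_cycle_iff.2 ⟨δ, hcode.sum_eq_zero, ⟨k, hδ⟩, rfl⟩,
      (isJaegerTree_orient_iff hδ).2 hcode.ne_neg_one,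
      (numTailEdges_orient_update hδ).trans hcard⟩
  · rintro ⟨k, δ⟩ ⟨hcode, -⟩ ⟨k', δ'⟩ ⟨hcode', -⟩ h
    obtain ⟨hD, hT⟩ := Prod.mk.inj h
    obtain rfl := orient_injective hD
    have hsupport := congrArg Function.support (orient_injective hT)
    rw [support_update_zero_eq_compl_singleton hcode.ne_zero,
      support_update_zero_eq_compl_singleton hcode'.ne_zero, compl_inj_iff,
      Set.singleton_eq_singleton_iff] at hsupport
    exact Prod.ext hsupport rfl
  · rintro ⟨D, T⟩ ⟨hfacet, hjaeger, hcard⟩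
    obtain ⟨δ, hsum, -, rfl⟩ := isFacetGraph_cycle_iff.1 hfacet
    obtain ⟨k, hδ, rfl⟩ := isSpanningTreeOf_orient_iff.1 hjaeger.1
    exact ⟨(k, δ), ⟨⟨hsum, hδ, (isJaegerTree_orient_iff hδ).1 hjaeger⟩,
      (numTailEdges_orient_update hδ).symm.trans hcard⟩, rfl⟩

/-- For the cycle graph `C_n` (`n ≥ 3`) with its unique ribbon structure and the basis
`(v₀, v₀v₁)`, the total number of Jaeger trees with exactly `i` tail-edges over all facet
graphs of `C_n` is `∑_{j=0}^{i} C(2j, j) · C(n − 1 − 2j, i − j)`, for each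
`0 ≤ i ≤ ⌊(n−1)/2⌋`. -/
theorem cycle_jaeger_trees_with_i_tail_edges
    (n : ℕ) [NeZero n] (hn : 3 ≤ n)
    (Cn : SimpleGraph (ZMod n))
    (hCn : Cn = SimpleGraph.fromRel (fun u v : ZMod n => v = u + 1))
    (ρ : ZMod n → ZMod n → ZMod n)
    (hρ : ρ = fun x y : ZMod n => if y = x + 1 then x - 1 else x + 1) :
    ∀ i : ℕ, i ≤ (n - 1) / 2 →
      Nat.card {q : Set (ZMod n × ZMod n) × Set (ZMod n × ZMod n) //
        IsFacetGraph Cn q.1 ∧ IsJaegerTree ρ 0 1 q.1 q.2 ∧ numTailEdges 0 q.2 = i} =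
      ∑ j ∈ Finset.range (i + 1),
        Nat.choose (2 * j) j * Nat.choose (n - 1 - 2 * j) (i - j) := by
  intro i hi
  have : Fact (3 ≤ n) := ⟨hn⟩
  have hCn' : Cn = cycleSubgraph Set.univ := by
    simp only [hCn, cycleSubgraph, Set.mem_univ, and_true]
  have hρ' : ρ = cycleRibbon := hρ
  subst hCn' hρ'
  rw [← card_jaegerCodes_eq_sum_choose hi, ← Set.ncard_coe_finset, Finset.coe_filter_univ]
  exact (bijOn_jaegerCodes i).ncard_eq.symm

end SEP
end

section
/- Let 𝒢 be a finite connected simple bipartite graph that is not a tree, with a fixed ribbon structure and basis (b_0, b_0b_1). Let 𝒯 be a spanning tree of 𝒢; for each edge e ∉ 𝒯 let e⃗ denote the orientation of e whose tail is reached before its head in the tour of 𝒯, and let x_{e⃗} = 𝐯 − 𝐮 for e⃗ = u→v. Fix 0 < δ < 1/|E| and set p_𝒯 = (1 + δ) · (1/|E ∖ 𝒯|) · ∑_{e ∉ 𝒯} x_{e⃗}. For each semi-balanced orientation G of 𝒢, let λ_G be the linear functional on the affine span of P_𝒢 with λ_G = 1 on the facet Q_G of P_𝒢 and λ_G ≤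 1 on P_𝒢. Then λ_G(p_𝒯) > 1 if the orientation that G induces on 𝒯 makes 𝒯 a Jaeger tree of G, and λ_G(p_𝒯) < 1 otherwise. In other words, the facets of P_𝒢 visible from p_𝒯 are exactly those facets Q_G in which 𝒯 is a Jaeger tree. -/
open scoped Classical Pointwise

namespace SEP

/-! Since `λ_G` is `1` on the arcs of `G` and `-1` on their reversals, its value on the sum of
the `x_{e⃗}` is the number of non-tree edges on which the tour orientation and `G` agree minus the
number on which they disagree. The tree is Jaeger exactly when they agree on all `N = |E ∖ 𝒯|` of
them, and then `λ_G(p_𝒯) = 1 + δ`. Otherwise the difference is at most `N - 1`, so that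
`λ_G(p_𝒯) ≤ (1 + δ) (N - 1) / N`, which is less than `1` because `δ N < 1`. -/

theorem finsum_mem_const {α M : Type*} [AddCommMonoid M] {s : Set α} (hs : s.Finite) (c : M) :
    ∑ᶠ _ ∈ s, c = s.ncard • c := by
  rw [finsum_mem_eq_finite_toFinset_sum _ hs, Finset.sum_const, Set.ncard_eq_toFinset_card s hs]

theorem one_add_mul_inv_mul_lt_one {δ x N : ℝ} (hδ : 0 < δ) (hN : 0 < N) (hδN : δ < 1 / N)
    (hx : x ≤ N - 1) : (1 + δ) * (N⁻¹ * x) < 1 := by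
  have hδN' : δ * N < 1 := (lt_div_iff₀ hN).1 hδN
  calc (1 + δ) * (N⁻¹ * x) ≤ (1 + δ) * (N⁻¹ * (N - 1)) := by gcongr
    _ = (1 + δ) * (N - 1) / N := by ring
    _ < 1 := by
      rw [div_lt_one hN]
      linarith

section Orientation

variable {V : Type*} {G : SimpleGraph V} {D S : Set (V × V)} {T : Set (Sym2 V)}

theorem und_eq_image (D : Set (V × V)) : und D = (fun p : V × V => s(p.1, p.2)) '' D := by
  ext e
  simp only [und, Set.mem_ofPred_eq, Set.mem_image, eq_comm]

theorem fromDir_eq_fromEdgeSet_und (D : Set (V × V)) :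
    fromDir D = SimpleGraph.fromEdgeSet (und D) := by
  ext u v
  have mem_und : s(u, v) ∈ und D ↔ (u, v) ∈ D ∨ (v, u) ∈ D := by
    simp only [und, Set.mem_ofPred_eq, Prod.exists, Sym2.eq_iff]
    grind
  rw [fromDir, SimpleGraph.fromRel_adj, SimpleGraph.fromEdgeSet_adj, mem_und, and_comm]

theorem IsOrientation.swap_mem_iff_notMem (hD : IsOrientation G D) {p : V × V}
    (hp : G.Adj p.1 p.2) : p.swap ∈ D ↔ p ∉ D :=
  hD.2 hp.symm

theorem IsOrientation.injOn_edge (hD : IsOrientation G D) :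
    Set.InjOn (fun p : V × V => s(p.1, p.2)) D := by
  intro p hp q hq hpq
  rcases Sym2.mk_eq_mk_iff.1 hpq with heq | hswap
  · exact heq
  · have hp_swap : p.swap ∈ D := by rwa [hswap, Prod.swap_swap]
    exact absurd hp ((hD.swap_mem_iff_notMem (hD.1 p hp)).1 hp_swap)

theorem IsOrientation.und_eq_edgeSet (hD : IsOrientation G D) : und D = G.edgeSet := by
  ext e
  constructor
  · rintro ⟨p, hp, rfl⟩
    exact hD.1 p hp
  · induction e using Sym2.ind with
    | _ u v =>
      intro huv
      by_cases h : (u, v) ∈ D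
      · exact ⟨(u, v), h, rfl⟩
      · exact ⟨(v, u), (hD.swap_mem_iff_notMem (p := (u, v)) huv).2 h, Sym2.eq_swap⟩

theorem IsOrientation.und_sep (hD : IsOrientation G D) (T : Set (Sym2 V)) :
    und {p ∈ D | s(p.1, p.2) ∈ T} = G.edgeSet ∩ T := by
  rw [← hD.und_eq_edgeSet, und_eq_image, und_eq_image]
  exact Set.image_inter_preimage _ D T

theorem IsOrientation.ncard_sep_notMem (hD : IsOrientation G D) (T : Set (Sym2 V)) :
    {p ∈ D | s(p.1, p.2) ∉ T}.ncard = (G.edgeSet \ T).ncard :=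
  calc {p ∈ D | s(p.1, p.2) ∉ T}.ncard
      = (und {p ∈ D | s(p.1, p.2) ∈ Tᶜ}).ncard := by
        rw [und_eq_image, (hD.injOn_edge.mono (Set.sep_subset _ _)).ncard_image]
        rfl
    _ = (G.edgeSet \ T).ncard := by rw [hD.und_sep, Set.sdiff_eq]

theorem IsOrientation.isSpanningTreeOf_sep (hD : IsOrientation G D) (hT : T ⊆ G.edgeSet)
    (htree : (SimpleGraph.fromEdgeSet T).IsTree) :
    IsSpanningTreeOf {p ∈ D | s(p.1, p.2) ∈ T} D := by
  refine ⟨Set.sep_subset _ _, ?_⟩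
  rwa [fromDir_eq_fromEdgeSet_und, hD.und_sep, Set.inter_eq_right.2 hT]

theorem IsOrientation.eq_sep_of_sep_subset (hD : IsOrientation G D)
    (hadj : ∀ p ∈ S, G.Adj p.1 p.2) (hST : ∀ p ∈ S, s(p.1, p.2) ∉ T)
    (hasymm : ∀ p ∈ S, p.swap ∉ S) (hDS : {p ∈ D | s(p.1, p.2) ∉ T} ⊆ S) :
    S = {p ∈ D | s(p.1, p.2) ∉ T} := by
  refine Set.Subset.antisymm (fun p hp => ⟨?_, hST p hp⟩) hDS
  by_contra hpD
  have hswap : p.swap ∈ D := (hD.swap_mem_iff_notMem (hadj p hp)).2 hpD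
  refine hasymm p hp (hDS ⟨hswap, ?_⟩)
  rw [Prod.fst_swap, Prod.snd_swap, Sym2.eq_swap]
  exact hST p hp

theorem nonempty_edgeSet_sdiff (hG : ¬ G.IsAcyclic)
    (hT : (SimpleGraph.fromEdgeSet T).IsAcyclic) : (G.edgeSet \ T).Nonempty := by
  refine Set.sdiff_nonempty.2 fun hGT => hG (hT.anti ?_)
  rw [← SimpleGraph.fromEdgeSet_edgeSet G]
  exact SimpleGraph.fromEdgeSet_mono hGT

end Orientation

section Functional

variable {V : Type*} [DecidableEq V] {G : SimpleGraph V} {D S : Set (V × V)} {T : Set (Sym2 V)}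
  {lam : (V → ℝ) →ₗ[ℝ] ℝ}

theorem map_arc_eq_neg_one (hD : IsOrientation G D)
    (hlam : ∀ p ∈ D, lam (stdVec p.2 - stdVec p.1) = 1) {p : V × V} (hp : G.Adj p.1 p.2)
    (hpD : p ∉ D) : lam (stdVec p.2 - stdVec p.1) = -1 := by
  have hswap : lam (stdVec p.1 - stdVec p.2) = 1 :=
    hlam p.swap ((hD.swap_mem_iff_notMem hp).2 hpD)
  rw [← neg_sub, map_neg, hswap]

theorem map_finsum_arc (hD : IsOrientation G D)
    (hlam : ∀ p ∈ D, lam (stdVec p.2 - stdVec p.1) = 1) (hS : S.Finite)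
    (hadj : ∀ p ∈ S, G.Adj p.1 p.2) :
    lam (∑ᶠ p ∈ S, (stdVec p.2 - stdVec p.1)) = (S ∩ D).ncard - (S \ D).ncard := by
  have agree : ∑ᶠ p ∈ S ∩ D, lam (stdVec p.2 - stdVec p.1) = (S ∩ D).ncard := by
    rw [finsum_mem_congr rfl fun p hp => hlam p hp.2,
      finsum_mem_const (hS.inter_of_left D), nsmul_one]
  have disagree : ∑ᶠ p ∈ S \ D, lam (stdVec p.2 - stdVec p.1) = -((S \ D).ncard : ℝ) := by
    rw [finsum_mem_congr rfl fun p hp => map_arc_eq_neg_one hD hlam (hadj p hp.1) hp.2,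
      finsum_mem_const hS.sdiff, smul_neg, nsmul_one]
  calc lam (∑ᶠ p ∈ S, (stdVec p.2 - stdVec p.1))
      = ∑ᶠ p ∈ S, lam (stdVec p.2 - stdVec p.1) := lam.toAddMonoidHom.map_finsum_mem _ hS
    _ = (S ∩ D).ncard - (S \ D).ncard := by
        rw [← finsum_mem_inter_add_sdiff D hS, agree, disagree, sub_eq_add_neg]

theorem map_finsum_arc_eq_of_sep_subset (hD : IsOrientation G D)
    (hlam : ∀ p ∈ D, lam (stdVec p.2 - stdVec p.1) = 1) (hS : S.Finite)
    (hadj : ∀ p ∈ S, G.Adj p.1 p.2) (hST : ∀ p ∈ S, s(p.1, p.2) ∉ T)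
    (hasymm : ∀ p ∈ S, p.swap ∉ S) (hDS : {p ∈ D | s(p.1, p.2) ∉ T} ⊆ S) :
    lam (∑ᶠ p ∈ S, (stdVec p.2 - stdVec p.1)) = (G.edgeSet \ T).ncard := by
  have hSD : S = {p ∈ D | s(p.1, p.2) ∉ T} := hD.eq_sep_of_sep_subset hadj hST hasymm hDS
  have hsub : S ⊆ D := hSD ▸ Set.sep_subset _ _
  rw [map_finsum_arc hD hlam hS hadj, Set.inter_eq_left.2 hsub, Set.sdiff_eq_empty.2 hsub,
    Set.ncard_empty, Nat.cast_zero, sub_zero, hSD, hD.ncard_sep_notMem]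

theorem map_finsum_arc_le_of_not_sep_subset (hD : IsOrientation G D) (hfin : D.Finite)
    (hlam : ∀ p ∈ D, lam (stdVec p.2 - stdVec p.1) = 1) (hS : S.Finite)
    (hadj : ∀ p ∈ S, G.Adj p.1 p.2) (hST : ∀ p ∈ S, s(p.1, p.2) ∉ T)
    (hDS : ¬ {p ∈ D | s(p.1, p.2) ∉ T} ⊆ S) :
    lam (∑ᶠ p ∈ S, (stdVec p.2 - stdVec p.1)) ≤ (G.edgeSet \ T).ncard - 1 := by
  have hssub : S ∩ D ⊂ {p ∈ D | s(p.1, p.2) ∉ T} :=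
    ⟨fun p hp => ⟨hp.2, hST p hp.1⟩, fun h => hDS fun p hp => (h hp).1⟩
  have hagree : (S ∩ D).ncard + 1 ≤ (G.edgeSet \ T).ncard :=
    hD.ncard_sep_notMem T ▸ Set.ncard_lt_ncard hssub (hfin.subset (Set.sep_subset _ _))
  have hagree' : ((S ∩ D).ncard : ℝ) + 1 ≤ (G.edgeSet \ T).ncard := by exact_mod_cast hagree
  rw [map_finsum_arc hD hlam hS hadj]
  linarith [(S \ D).ncard.cast_nonneg (α := ℝ)]

end Functional

section Tour

variable {V : Type*} {G : SimpleGraph V} {D : Set (V × V)} {ρ : V → V → V} {b0 b1 : V}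
  {T : Set (Sym2 V)}

/-- The arcs `e⃗`, for the edges `e` of `G` outside `T`, whose tail is reached before its head in
the tour of `T`; the facet functionals are evaluated on the sum of their vectors. -/
def tourOrientation (G : SimpleGraph V) (ρ : V → V → V) (T : Set (Sym2 V)) (b0 b1 : V) :
    Set (V × V) :=
  {p | G.Adj p.1 p.2 ∧ s(p.1, p.2) ∉ T ∧
    firstVisit ρ T b0 b1 p.1 p.2 < firstVisit ρ T b0 b1 p.2 p.1}

theorem swap_notMem_tourOrientation {p : V × V} (hp : p ∈ tourOrientation G ρ T b0 b1) :
    p.swap ∉ tourOrientation G ρ T b0 b1 :=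
  fun hswap => lt_asymm hp.2.2 hswap.2.2

theorem isJaegerTree_sep_iff (hD : IsOrientation G D) (hT : T ⊆ G.edgeSet)
    (htree : (SimpleGraph.fromEdgeSet T).IsTree) :
    IsJaegerTree ρ b0 b1 D {p ∈ D | s(p.1, p.2) ∈ T} ↔
      {p ∈ D | s(p.1, p.2) ∉ T} ⊆ tourOrientation G ρ T b0 b1 := by
  have hund : und {p ∈ D | s(p.1, p.2) ∈ T} = T := by
    rw [hD.und_sep, Set.inter_eq_right.2 hT]
  rw [IsJaegerTree, hund]
  constructor
  · rintro ⟨-, hfirst⟩ p ⟨hpD, hpT⟩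
    exact ⟨hD.1 p hpD, hpT, hfirst p hpD hpT⟩
  · exact fun hsub => ⟨hD.isSpanningTreeOf_sep hT htree, fun p hpD hpT => (hsub ⟨hpD, hpT⟩).2.2⟩

end Tour

/-- Visibility formula for bipartite graphs: for a spanning tree `𝒯` of a connected
bipartite non-tree graph `G`, orienting each non-tree edge so that its tail is reached
before its head in the tour of `𝒯`, the point
`p_𝒯 = (1 + δ) · (1/|E ∖ 𝒯|) · ∑_{e ∉ 𝒯} x_{e⃗}` (with `0 < δ < 1/|E|`) satisfies
`λ_G(p_𝒯) > 1` for the supporting functional `λ_G` of a facet `Q_G` exactly when `𝒯` is a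
Jaeger tree of the corresponding semi-balanced orientation `G`, and `λ_G(p_𝒯) < 1`
otherwise; i.e. the facets visible from `p_𝒯` are exactly those in which `𝒯` is Jaeger. -/
theorem visible_facets_are_jaeger_facets
    {V : Type*} [Fintype V] [DecidableEq V]
    (G : SimpleGraph V) (hG : G.Connected)
    (s : Set V) (hbip : IsBipartition G s) (hnt : ¬ G.IsAcyclic)
    (ρ : V → V → V) (hrib : IsRibbon G ρ) (b0 b1 : V) (hb : G.Adj b0 b1)
    (T : Set (Sym2 V)) (hTsub : T ⊆ G.edgeSet)
    (hTtree : (SimpleGraph.fromEdgeSet T).IsTree)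
    (S : Set (V × V))
    (hS : S = {p : V × V | G.Adj p.1 p.2 ∧ s(p.1, p.2) ∉ T ∧
      firstVisit ρ T b0 b1 p.1 p.2 < firstVisit ρ T b0 b1 p.2 p.1})
    (δ : ℝ) (hδ0 : 0 < δ) (hδ1 : δ < 1 / (Nat.card G.edgeSet : ℝ))
    (pT : V → ℝ)
    (hpT : pT = (1 + δ) •
      (Nat.card {e : Sym2 V // e ∈ G.edgeSet ∧ e ∉ T} : ℝ)⁻¹ •
      ∑ᶠ p ∈ S, (stdVec p.2 - stdVec p.1))
    (D : Set (V × V)) (hD : IsOrientation G D) (hsb : IsSemiBalanced D)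
    (lam : (V → ℝ) →ₗ[ℝ] ℝ)
    (hlam1 : ∀ x ∈ simplexOf D, lam x = 1)
    (hlam2 : ∀ x ∈ symEdgePolytope G, lam x ≤ 1) :
    (IsJaegerTree ρ b0 b1 D {p ∈ D | s(p.1, p.2) ∈ T} → lam pT > 1) ∧
    (¬ IsJaegerTree ρ b0 b1 D {p ∈ D | s(p.1, p.2) ∈ T} → lam pT < 1) := by
  change S = tourOrientation G ρ T b0 b1 at hS
  change pT = (1 + δ) • ((G.edgeSet \ T).ncard : ℝ)⁻¹ • _ at hpT
  subst hS hpT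
  have hlamD : ∀ p ∈ D, lam (stdVec p.2 - stdVec p.1) = 1 := fun p hp =>
    hlam1 _ (subset_convexHull ℝ _ ⟨p, hp, rfl⟩)
  have hNpos : (0 : ℝ) < (G.edgeSet \ T).ncard :=
    Nat.cast_pos.2 (nonempty_edgeSet_sdiff hnt hTtree.isAcyclic).ncard_pos
  have hN_le : ((G.edgeSet \ T).ncard : ℝ) ≤ Nat.card G.edgeSet :=
    Nat.cast_le.2 (Set.ncard_le_ncard Set.sdiff_subset)
  rw [isJaegerTree_sep_iff hD hTsub hTtree, map_smul, map_smul, smul_eq_mul, smul_eq_mul]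
  constructor
  · intro hagree
    rw [map_finsum_arc_eq_of_sep_subset hD hlamD (Set.toFinite _) (fun _ hp => hp.1)
      (fun _ hp => hp.2.1) (fun _ => swap_notMem_tourOrientation) hagree,
      inv_mul_cancel₀ hNpos.ne', mul_one]
    linarith
  · intro hdisagree
    exact one_add_mul_inv_mul_lt_one hδ0 hNpos
      (hδ1.trans_le (one_div_le_one_div_of_le hNpos hN_le))
      (map_finsum_arc_le_of_not_sep_subset hD (Set.toFinite _) hlamD (Set.toFinite _)
        (fun _ hp => hp.1) (fun _ hp => hp.2.1) hdisagree)

end SEP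
end
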